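/- Let k and ℓ be fixed positive integers with 1 ≤ ℓ ≤ k and gcd(ℓ, k) = 1. Then there exists a constant C > 0 (depending on k) such that for all real x ≥ 16, |Σ_{2 ≤ n ≤ x, p(n) ≡ ℓ (mod k)} μ(n) ω(n) {x/n}| ≤ C · x · (log log x)^{5/2} / √(log x), where {y} = y − ⌊y⌋ denotes the fractional part and the sum runs over integers 2 ≤ n ≤ x whose smallest prime factor p(n) is congruent to ℓ modulo k. -/

import Mathlib

open Finset ArithmeticFunction Real

/-- Tail kernel: fractional part cut off below `N`. -/
noncomputable def fractTail (N : ℕ) (t : ℝ) : ℂ :=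
  Set.indicator (Set.Ioi (N : ℝ)) (fun t => ((Int.fract t : ℝ) : ℂ)) t

lemma fractTail_norm_le (N : ℕ) (t : ℝ) : ‖fractTail N t‖ ≤ 1 := by
  unfold fractTail Set.indicator
  split_ifs
  · rw [Complex.norm_real, Real.norm_of_nonneg (Int.fract_nonneg t)]
    exact (Int.fract_lt_one t).le
  · simp

lemma fractTail_measurable (N : ℕ) : Measurable (fractTail N) := by
  unfold fractTail
  exact (Complex.measurable_ofReal.comp measurable_fract).indicator measurableSet_Ioi

lemma fractTail_locInt (N : ℕ) : MeasureTheory.LocallyIntegrableOn (fractTail N) (Set.Ioi 0) := by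
  have : MeasureTheory.LocallyIntegrable (fun _ : ℝ => (1:ℝ)) := MeasureTheory.locallyIntegrable_const 1
  refine (this.mono (fractTail_measurable N).aestronglyMeasurable ?_).locallyIntegrableOn _
  filter_upwards with t
  simpa using fractTail_norm_le N t

lemma fractTail_mellin_diff (N : ℕ) (hN : 1 ≤ N) {s : ℂ} (hs : 0 < s.re) :
    DifferentiableAt ℂ (mellin (fractTail N)) (-s) := by
  refine mellin_differentiableAt_of_isBigO_rpow (a := 0) (b := (-s).re - 1) (fractTail_locInt N) ?_ (by simpa using hs) ?_ (by linarith)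
  · refine Asymptotics.IsBigO.of_bound 1 ?_
    filter_upwards with t
    simpa using fractTail_norm_le N t
  · refine Asymptotics.IsBigO.of_bound 1 ?_
    have : ∀ᶠ t : ℝ in nhdsWithin 0 (Set.Ioi 0), t < 1 :=
      nhdsWithin_le_nhds (eventually_lt_nhds one_pos)
    filter_upwards [this] with t ht
    have : fractTail N t = 0 := by
      unfold fractTail
      rw [Set.indicator_of_notMem]
      have : (1:ℝ) ≤ N := by exact_mod_cast hN
      simp; linarith
    rw [this]; simp only [norm_zero]; positivity

lemma mellin_fractTail_eq (N : ℕ) (s : ℂ) :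
    mellin (fractTail N) (-s) = ∫ t in Set.Ioi (N:ℝ), ((Int.fract t : ℝ) : ℂ) * (t:ℂ) ^ (-(s+1)) := by
  unfold mellin
  have h : ∀ t : ℝ, (t:ℂ) ^ (-s - 1) • fractTail N t =
      Set.indicator (Set.Ioi (N:ℝ)) (fun t : ℝ => ((Int.fract t : ℝ) : ℂ) * (t:ℂ) ^ (-(s+1))) t := by
    intro t
    unfold fractTail Set.indicator
    split_ifs
    · rw [smul_eq_mul, mul_comm]; congr 2; ring
    · simp
  simp_rw [h]
  rw [MeasureTheory.setIntegral_indicator measurableSet_Ioi]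
  congr 2
  ext t
  simp only [Set.mem_inter_iff, Set.mem_Ioi]
  constructor
  · exact fun h => h.2
  · intro h; exact ⟨lt_of_le_of_lt (Nat.cast_nonneg N) h, h⟩

lemma mellin_fractTail_norm (N : ℕ) (hN : 1 ≤ N) {s : ℂ} (hs : 0 < s.re) :
    ‖mellin (fractTail N) (-s)‖ ≤ (N:ℝ) ^ (-s.re) / s.re := by
  have hN0 : (0:ℝ) < N := by exact_mod_cast hN
  rw [mellin_fractTail_eq]
  have hi : MeasureTheory.IntegrableOn (fun t : ℝ => t ^ (-(s.re+1))) (Set.Ioi (N:ℝ)) :=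
    integrableOn_Ioi_rpow_of_lt (by linarith) hN0
  have h1 := MeasureTheory.norm_integral_le_of_norm_le (μ := MeasureTheory.volume.restrict (Set.Ioi (N:ℝ)))
    (f := fun t : ℝ => ((Int.fract t : ℝ) : ℂ) * (t:ℂ) ^ (-(s+1))) hi (by
      filter_upwards [MeasureTheory.ae_restrict_mem measurableSet_Ioi] with t ht
      have ht0 : 0 < t := hN0.trans ht
      rw [norm_mul, Complex.norm_cpow_eq_rpow_re_of_pos ht0, Complex.norm_real,
        Real.norm_of_nonneg (Int.fract_nonneg t)]
      have : (-(s+1)).re = -(s.re+1) := by simp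
      rw [this]
      exact mul_le_of_le_one_left (by positivity) (Int.fract_lt_one t).le)
  refine h1.trans (le_of_eq ?_)
  rw [integral_Ioi_rpow_of_lt (by linarith) hN0]
  have : -(s.re+1)+1 = -s.re := by ring
  rw [this, neg_div_neg_eq]

lemma zeta_formula_gt_one (N : ℕ) (hN : 1 ≤ N) {s : ℂ} (hs : 1 < s.re) :
    riemannZeta s = ∑ n ∈ Finset.Icc 1 N, (n:ℂ) ^ (-s) + (N:ℂ) ^ (1 - s) / (s - 1)
      - s * mellin (fractTail N) (-s) := by
  have hN0 : (0:ℝ) < N := by exact_mod_cast hN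
  have hs0 : s ≠ 0 := by intro h; rw [h] at hs; simp at hs; linarith
  have hs1 : s - 1 ≠ 0 := by intro h; rw [sub_eq_zero] at h; rw [h] at hs; simp at hs
  let f : ℕ → ℂ := fun n => if N < n then 1 else 0
  have hsum1 : LSeriesSummable 1 s := LSeriesSummable_one_iff.mpr hs
  have hf : LSeriesSummable f s := by
    refine LSeriesSummable_of_le_const_mul_rpow (x := 1) hs ⟨1, fun n _ => ?_⟩
    simp only [f]; split_ifs <;> simp
  have e1 : riemannZeta s = ∑ n ∈ Finset.Icc 1 N, (n:ℂ) ^ (-s) + LSeries f s := by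
    rw [← LSeries_one_eq_riemannZeta hs]
    have : LSeries f s = LSeries 1 s - LSeries (fun n => if N < n then 0 else 1) s := by
      rw [← LSeries_sub hsum1]
      · congr 1; ext n; simp only [f, Pi.sub_apply, Pi.one_apply]; split_ifs <;> simp
      · refine LSeriesSummable_of_le_const_mul_rpow (x := 1) hs ⟨1, fun n _ => ?_⟩
        split_ifs <;> simp
    rw [this]
    have : LSeries (fun n => if N < n then 0 else 1) s = ∑ n ∈ Finset.Icc 1 N, (n:ℂ) ^ (-s) := by
      unfold LSeries
      rw [tsum_eq_sum (s := Finset.Icc 1 N)]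
      · refine Finset.sum_congr rfl fun n hn => ?_
        rw [Finset.mem_Icc] at hn
        rw [LSeries.term_of_ne_zero (by omega), if_neg (by omega), Complex.cpow_neg, one_div]
      · intro n hn
        rcases Nat.eq_zero_or_pos n with h | h
        · simp [h]
        · rw [LSeries.term_of_ne_zero (by omega), if_pos]; · simp
          simp at hn; omega
    rw [this]; ring
  have e2 : LSeries f s = s * ∫ t in Set.Ioi (1:ℝ), (∑ k ∈ Finset.Icc 1 ⌊t⌋₊, f k) * (t:ℂ) ^ (-(s+1)) := by
    refine LSeries_eq_mul_integral f zero_le_one hs hf ?_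
    refine Asymptotics.IsBigO.of_bound 1 ?_
    filter_upwards with n
    refine (norm_sum_le _ _).trans ?_
    have : ∀ k ∈ Finset.Icc 1 n, ‖f k‖ ≤ 1 := by
      intro k _; simp only [f]; split_ifs <;> simp
    refine (Finset.sum_le_sum this).trans ?_
    simp
  have hS : ∀ t : ℝ, 1 < t → (∑ k ∈ Finset.Icc 1 ⌊t⌋₊, f k) = 
      Set.indicator (Set.Ioi (N:ℝ)) (fun t : ℝ => ((t:ℂ) - N) - ((Int.fract t : ℝ):ℂ)) t := by
    intro t ht
    have h1 : ∑ k ∈ Finset.Icc 1 ⌊t⌋₊, f k = ((⌊t⌋₊ - N : ℕ) : ℂ) := by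
      simp only [f]
      rw [Finset.sum_ite, Finset.sum_const_zero, add_zero, Finset.sum_const, nsmul_eq_mul, mul_one]
      congr 1
      have : (Finset.Icc 1 ⌊t⌋₊).filter (fun k => N < k) = Finset.Ioc N ⌊t⌋₊ := by
        ext k; simp; omega
      rw [this, Nat.card_Ioc]
    rw [h1]
    by_cases h : (N:ℝ) < t
    · rw [Set.indicator_of_mem (by simpa using h)]
      have hle : N ≤ ⌊t⌋₊ := Nat.le_floor h.le
      rw [Nat.cast_sub hle]
      have : (⌊t⌋₊ : ℝ) + Int.fract t = t := by
        rw [natCast_floor_eq_intCast_floor (by linarith)]; exact Int.floor_add_fract t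
      have h2 : (⌊t⌋₊ : ℂ) + ((Int.fract t:ℝ):ℂ) = (t:ℂ) := by
        have h3 := congrArg (fun r : ℝ => (r:ℂ)) this
        simp only [Complex.ofReal_add, Complex.ofReal_natCast] at h3
        exact h3
      rw [← h2]; ring
    · rw [Set.indicator_of_notMem (by simpa using h)]
      push Not at h
      have : ⌊t⌋₊ ≤ N := by
        have := Nat.floor_mono h; simpa using this
      simp [Nat.sub_eq_zero_of_le this]
  have e3 : ∫ t in Set.Ioi (1:ℝ), (∑ k ∈ Finset.Icc 1 ⌊t⌋₊, f k) * (t:ℂ) ^ (-(s+1)) =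
      ∫ t in Set.Ioi (N:ℝ), (((t:ℂ) ^ (-s) - N * (t:ℂ) ^ (-(s+1))) - ((Int.fract t : ℝ):ℂ) * (t:ℂ) ^ (-(s+1))) := by
    have : ∫ t in Set.Ioi (1:ℝ), (∑ k ∈ Finset.Icc 1 ⌊t⌋₊, f k) * (t:ℂ) ^ (-(s+1)) =
        ∫ t in Set.Ioi (1:ℝ), Set.indicator (Set.Ioi (N:ℝ)) (fun t : ℝ => (((t:ℂ) ^ (-s) - N * (t:ℂ) ^ (-(s+1))) - ((Int.fract t : ℝ):ℂ) * (t:ℂ) ^ (-(s+1)))) t := by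
      refine MeasureTheory.setIntegral_congr_fun measurableSet_Ioi fun t ht => ?_
      beta_reduce
      rw [hS t ht]
      unfold Set.indicator
      split_ifs
      · have ht0 : (t:ℂ) ≠ 0 := by
          have : (0:ℝ) < t := lt_trans one_pos ht
          exact_mod_cast this.ne'
        have : (t:ℂ) ^ (-s) = t * (t:ℂ) ^ (-(s+1)) := by
          rw [show -s = 1 + -(s+1) by ring, Complex.cpow_add _ _ ht0, Complex.cpow_one]
        beta_reduce
        rw [this]; ring
      · simp
    rw [this, MeasureTheory.setIntegral_indicator measurableSet_Ioi]
    congr 2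
    ext t
    simp only [Set.mem_inter_iff, Set.mem_Ioi]
    constructor
    · exact fun h => h.2
    · intro h; exact ⟨lt_of_le_of_lt (by exact_mod_cast hN) h, h⟩
  have i1 : MeasureTheory.IntegrableOn (fun t : ℝ => (t:ℂ) ^ (-s)) (Set.Ioi (N:ℝ)) :=
    integrableOn_Ioi_cpow_of_lt (by simpa using hs) hN0
  have i2 : MeasureTheory.IntegrableOn (fun t : ℝ => (t:ℂ) ^ (-(s+1))) (Set.Ioi (N:ℝ)) :=
    integrableOn_Ioi_cpow_of_lt (by simp; linarith) hN0
  have i3 : MeasureTheory.IntegrableOn (fun t : ℝ => ((Int.fract t : ℝ):ℂ) * (t:ℂ) ^ (-(s+1))) (Set.Ioi (N:ℝ)) := by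
    refine MeasureTheory.Integrable.mono i2 ?_ ?_
    · exact (Complex.measurable_ofReal.comp measurable_fract).aestronglyMeasurable.mul i2.aestronglyMeasurable
    · filter_upwards with t
      rw [norm_mul, Complex.norm_real, Real.norm_of_nonneg (Int.fract_nonneg t)]
      exact mul_le_of_le_one_left (norm_nonneg _) (Int.fract_lt_one t).le
  rw [e1, e2, e3, MeasureTheory.integral_sub, MeasureTheory.integral_sub, MeasureTheory.integral_const_mul, 
    integral_Ioi_cpow_of_lt (by simpa using hs) hN0, integral_Ioi_cpow_of_lt (by simp; linarith) hN0,
    mellin_fractTail_eq]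
  · have hNC : (N:ℂ) ≠ 0 := by exact_mod_cast hN0.ne'
    have h1 : ((N:ℝ):ℂ) ^ (-s + 1) = (N:ℂ) ^ (1 - s) := by
      rw [Complex.ofReal_natCast]; congr 1; ring
    have h2 : (N:ℂ) * ((N:ℝ):ℂ) ^ (-(s+1) + 1) = (N:ℂ) ^ (1 - s) := by
      rw [Complex.ofReal_natCast, show (1:ℂ) - s = 1 + (-(s+1)+1) by ring, Complex.cpow_add 1 (-(s+1)+1) hNC, Complex.cpow_one]
    have h3 : (N:ℂ) * (-((N:ℝ):ℂ) ^ (-(s+1) + 1) / (-(s+1)+1)) = (N:ℂ) ^ (1 - s) / s := by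
      rw [← h2]; rw [show (-(s+1)+1) = -s by ring]; field_simp
    rw [h3, h1, show -s + 1 = -(s-1) by ring, neg_div_neg_eq]
    field_simp
    ring
  · exact i1
  · exact i2.const_mul _
  · exact i1.sub (i2.const_mul _)
  · exact i3

lemma zeta1_eq {s : ℂ} (hs : s ≠ 1) : riemannZeta₁ s = (s - 1) * riemannZeta s := by
  rw [riemannZeta_eq_inv_sub_mul hs]
  rw [mul_inv_cancel_left₀ (sub_ne_zero.mpr hs)]

lemma zeta1_formula (N : ℕ) (hN : 1 ≤ N) {s : ℂ} (hs : 0 < s.re) :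
    riemannZeta₁ s = (s-1) * ∑ n ∈ Finset.Icc 1 N, (n:ℂ) ^ (-s) + (N:ℂ) ^ (1 - s)
      - (s-1) * s * mellin (fractTail N) (-s) := by
  let U : Set ℂ := {z | 0 < z.re}
  have hU : IsOpen U := isOpen_lt continuous_const Complex.continuous_re
  have hN0 : (N:ℂ) ≠ 0 := by exact_mod_cast (by omega : N ≠ 0)
  have hUc : IsPreconnected U := (convex_halfSpace_re_gt 0).isPreconnected
  have d1 : AnalyticOnNhd ℂ riemannZeta₁ U :=
    differentiable_riemannZeta₁.differentiableOn.analyticOnNhd hU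
  have d2 : AnalyticOnNhd ℂ (fun s : ℂ => (s-1) * ∑ n ∈ Finset.Icc 1 N, (n:ℂ) ^ (-s) + (N:ℂ) ^ (1 - s)
      - (s-1) * s * mellin (fractTail N) (-s)) U := by
    refine DifferentiableOn.analyticOnNhd ?_ hU
    intro z hz
    refine DifferentiableAt.differentiableWithinAt ?_
    have hm : DifferentiableAt ℂ (fun s => mellin (fractTail N) (-s)) z :=
      (fractTail_mellin_diff N hN hz).comp z differentiableAt_id.neg
    have hsum : DifferentiableAt ℂ (fun s : ℂ => ∑ n ∈ Finset.Icc 1 N, (n:ℂ) ^ (-s)) z := by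
      refine DifferentiableAt.fun_sum fun n hn => ?_
      refine DifferentiableAt.const_cpow (by fun_prop) (Or.inl ?_)
      have := (Finset.mem_Icc.mp hn).1
      exact_mod_cast (by omega : n ≠ 0)
    have hp : DifferentiableAt ℂ (fun s : ℂ => (N:ℂ) ^ (1 - s)) z :=
      DifferentiableAt.const_cpow (by fun_prop) (Or.inl hN0)
    fun_prop
  have h2 : (2:ℂ) ∈ U := by simp [U]
  have hev : riemannZeta₁ =ᶠ[nhds 2] (fun s : ℂ => (s-1) * ∑ n ∈ Finset.Icc 1 N, (n:ℂ) ^ (-s) + (N:ℂ) ^ (1 - s)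
      - (s-1) * s * mellin (fractTail N) (-s)) := by
    have : {z : ℂ | 1 < z.re} ∈ nhds (2:ℂ) := 
      (isOpen_lt continuous_const Complex.continuous_re).mem_nhds (by simp)
    filter_upwards [this] with z hz
    have hz : 1 < z.re := hz
    have hz1 : z ≠ 1 := by intro h; rw [h] at hz; simp at hz
    have : z - 1 ≠ 0 := sub_ne_zero.mpr hz1
    rw [zeta1_eq hz1, zeta_formula_gt_one N hN hz]
    field_simp
  exact d1.eqOn_of_preconnected_of_eventuallyEq d2 hUc h2 hev hs


lemma sum_inv_Icc_le (N : ℕ) : ∑ n ∈ Finset.Icc 1 N, ((n:ℝ))⁻¹ ≤ 1 + Real.log N := by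
  have := harmonic_le_one_add_log N
  rw [harmonic_eq_sum_Icc] at this
  push_cast at this
  exact this

/-- height parameter -/
noncomputable def hgt (s : ℂ) : ℝ := |s.im| + 4

/-- small power of the height -/
noncomputable def hgp (s : ℂ) : ℝ := (hgt s) ^ ((1:ℝ)/100)

lemma hgt_ge (s : ℂ) : 4 ≤ hgt s := by unfold hgt; linarith [abs_nonneg s.im]

lemma hgp_ge (s : ℂ) : 1 ≤ hgp s := by
  unfold hgp
  exact Real.one_le_rpow (by linarith [hgt_ge s]) (by norm_num)

lemma zeta1_upper (s : ℂ) (h1 : 1 - 1/200 ≤ s.re) (h2 : s.re ≤ 3) :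
    ‖riemannZeta₁ s‖ ≤ 212 * (hgt s * hgp s) := by
  set τ := hgt s with hτ
  have hτ4 : 4 ≤ τ := hgt_ge s
  set N : ℕ := ⌊|s.im|⌋₊ + 1 with hN
  have hN1 : 1 ≤ N := by omega
  have hN1' : (1:ℝ) ≤ N := by exact_mod_cast hN1
  have hNlo : |s.im| < N := by rw [hN]; push_cast; exact Nat.lt_floor_add_one _
  have hNhi : (N:ℝ) ≤ τ := by
    rw [hN]; push_cast
    have := Nat.floor_le (abs_nonneg s.im)
    rw [hτ, hgt]; linarith
  have hτN : τ ≤ 5 * N := by rw [hτ, hgt]; linarith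
  set m : ℝ := (N:ℝ) ^ ((1:ℝ)/200) with hm
  have hm1 : 1 ≤ m := Real.one_le_rpow hN1' (by norm_num)
  have hmm : m * m ≤ hgp s := by
    rw [hm, ← Real.rpow_add (by linarith), hgp]
    have : (1:ℝ)/200 + 1/200 = 1/100 := by norm_num
    rw [this]
    exact Real.rpow_le_rpow (by linarith) hNhi (by norm_num)
  have hre0 : 0 < s.re := by linarith
  rw [zeta1_formula N hN1 hre0]
  have n1 : ‖s - 1‖ ≤ τ := by
    refine (Complex.norm_le_abs_re_add_abs_im _).trans ?_
    simp only [Complex.sub_re, Complex.one_re, Complex.sub_im, Complex.one_im, sub_zero]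
    have : |s.re - 1| ≤ 2 := by rw [abs_le]; constructor <;> linarith
    rw [hτ, hgt]; linarith
  have n2 : ‖s‖ ≤ τ := by
    refine (Complex.norm_le_abs_re_add_abs_im _).trans ?_
    have : |s.re| ≤ 3 := by rw [abs_le]; constructor <;> linarith
    rw [hτ, hgt]; linarith
  have n3 : ‖∑ n ∈ Finset.Icc 1 N, (n:ℂ) ^ (-s)‖ ≤ 201 * (m * m) := by
    have hterm : ∀ n ∈ Finset.Icc 1 N, ‖(n:ℂ) ^ (-s)‖ ≤ m * ((n:ℝ))⁻¹ := by
      intro n hn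
      rw [Finset.mem_Icc] at hn
      have hn0 : (1:ℝ) ≤ n := by exact_mod_cast hn.1
      rw [Complex.norm_natCast_cpow_of_pos (by omega)]
      simp only [Complex.neg_re]
      calc (n:ℝ) ^ (-s.re) ≤ (n:ℝ) ^ ((1:ℝ)/200 + -1) :=
            Real.rpow_le_rpow_of_exponent_le hn0 (by linarith)
        _ = (n:ℝ) ^ ((1:ℝ)/200) * (n:ℝ)⁻¹ := by
            rw [Real.rpow_add (by linarith), Real.rpow_neg_one]
        _ ≤ m * (n:ℝ)⁻¹ := by
            refine mul_le_mul_of_nonneg_right ?_ (by positivity)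
            exact Real.rpow_le_rpow (by linarith) (by exact_mod_cast hn.2) (by norm_num)
    refine (norm_sum_le _ _).trans ((Finset.sum_le_sum hterm).trans ?_)
    rw [← Finset.mul_sum]
    have h3 := sum_inv_Icc_le N
    have h4 : Real.log N ≤ m / ((1:ℝ)/200) := Real.log_le_rpow_div (by linarith) (by norm_num)
    have : ∑ n ∈ Finset.Icc 1 N, ((n:ℝ))⁻¹ ≤ 201 * m := by
      have : m / ((1:ℝ)/200) = 200 * m := by field_simp
      linarith
    nlinarith
  have n4 : ‖(N:ℂ) ^ (1 - s)‖ ≤ m := by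
    rw [Complex.norm_natCast_cpow_of_pos (by omega)]
    simp only [Complex.sub_re, Complex.one_re]
    exact Real.rpow_le_rpow_of_exponent_le hN1' (by linarith)
  have n5 : ‖mellin (fractTail N) (-s)‖ ≤ 10 * m / τ := by
    refine (mellin_fractTail_norm N hN1 hre0).trans ?_
    have : (N:ℝ) ^ (-s.re) ≤ m * (N:ℝ)⁻¹ := by
      calc (N:ℝ) ^ (-s.re) ≤ (N:ℝ) ^ ((1:ℝ)/200 + -1) :=
            Real.rpow_le_rpow_of_exponent_le hN1' (by linarith)
        _ = m * (N:ℝ)⁻¹ := by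
            rw [Real.rpow_add (by linarith), Real.rpow_neg_one]
    have h5 : (N:ℝ)⁻¹ ≤ 5 / τ := by
      rw [inv_eq_one_div, div_le_div_iff₀ (by linarith) (by linarith)]; linarith
    have h6 : (N:ℝ) ^ (-s.re) ≤ 5 * m / τ := by
      refine this.trans ((mul_le_mul_of_nonneg_left h5 (by linarith)).trans (le_of_eq ?_)); ring
    rw [div_le_iff₀ hre0]
    refine h6.trans ?_
    have : 10 * m / τ * s.re = (5 * m / τ) * (2 * s.re) := by ring
    rw [this]
    exact le_mul_of_one_le_right (by positivity) (by linarith)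
  have t1 : ‖(s-1) * ∑ n ∈ Finset.Icc 1 N, (n:ℂ) ^ (-s)‖ ≤ τ * (201 * (m*m)) := by
    rw [norm_mul]; gcongr
  have t2 : ‖(s-1) * s * mellin (fractTail N) (-s)‖ ≤ τ * τ * (10 * m / τ) := by
    rw [norm_mul, norm_mul]; gcongr
  have t3 : τ * τ * (10 * m / τ) = 10 * (τ * m) := by field_simp
  have h7 : ‖(s-1) * ∑ n ∈ Finset.Icc 1 N, (n:ℂ) ^ (-s) + (N:ℂ) ^ (1 - s)
      - (s-1) * s * mellin (fractTail N) (-s)‖ ≤ τ * (201 * (m*m)) + m + 10 * (τ * m) := by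
    refine (norm_sub_le _ _).trans ?_
    have := norm_add_le ((s-1) * ∑ n ∈ Finset.Icc 1 N, (n:ℂ) ^ (-s)) ((N:ℂ) ^ (1 - s))
    linarith
  refine h7.trans ?_
  have hmm1 : m ≤ m * m := by nlinarith
  have e1 : τ * m ≤ τ * (m * m) := by gcongr
  have e2 : m ≤ τ * m := by nlinarith
  have e3 : τ * (m*m) ≤ τ * hgp s := by gcongr
  linarith

lemma hgt_near {s w : ℂ} (h : ‖w - s‖ ≤ 1) : hgt w ≤ 2 * hgt s := by
  have := (Complex.abs_im_le_norm (w - s)).trans h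
  rw [Complex.sub_im] at this
  have h2 : |w.im| ≤ |s.im| + 1 := by
    have := abs_sub_abs_le_abs_sub w.im s.im
    linarith
  unfold hgt
  linarith [abs_nonneg s.im]

lemma hgp_near {s w : ℂ} (h : ‖w - s‖ ≤ 1) : hgp w ≤ 2 * hgp s := by
  unfold hgp
  have h0 : 0 ≤ hgt s := by linarith [hgt_ge s]
  calc hgt w ^ ((1:ℝ)/100) ≤ (2 * hgt s) ^ ((1:ℝ)/100) :=
        Real.rpow_le_rpow (by linarith [hgt_ge w]) (hgt_near h) (by norm_num)
    _ = 2 ^ ((1:ℝ)/100) * hgt s ^ ((1:ℝ)/100) := Real.mul_rpow (by norm_num) h0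
    _ ≤ 2 * hgt s ^ ((1:ℝ)/100) := by
        refine mul_le_mul_of_nonneg_right ?_ (by positivity)
        calc (2:ℝ) ^ ((1:ℝ)/100) ≤ 2 ^ (1:ℝ) := Real.rpow_le_rpow_of_exponent_le (by norm_num) (by norm_num)
          _ = 2 := by norm_num

lemma zeta1_deriv_upper (s : ℂ) (h1 : 1 - 1/400 ≤ s.re) (h2 : s.re ≤ 2 + 1/2) :
    ‖deriv riemannZeta₁ s‖ ≤ 400000 * (hgt s * hgp s) := by
  have := Complex.norm_deriv_le_of_forall_mem_sphere_norm_le (c := s) (R := 1/400)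
    (C := 1000 * (hgt s * hgp s)) (f := riemannZeta₁) (by norm_num)
    (differentiable_riemannZeta₁.diffContOnCl) (by
      intro z hz
      rw [mem_sphere_iff_norm] at hz
      have hr := Complex.abs_re_le_norm (z - s)
      rw [hz, Complex.sub_re, abs_le] at hr
      have hz1 : ‖z - s‖ ≤ 1 := by rw [hz]; norm_num
      refine (zeta1_upper z (by linarith) (by linarith)).trans ?_
      have a1 := hgt_near hz1
      have a2 := hgp_near hz1
      have a3 := hgt_ge s
      have a4 := hgp_ge s
      have a5 := hgp_ge z
      have : hgt z * hgp z ≤ (2 * hgt s) * (2 * hgp s) :=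
        mul_le_mul a1 a2 (by linarith) (by linarith)
      have : 0 ≤ hgt s * hgp s := mul_nonneg (by linarith) (by linarith)
      linarith)
  refine this.trans (le_of_eq ?_)
  ring


lemma zeta_three_four_one {a : ℝ} (ha : 0 < a) (t : ℝ) :
    1 ≤ ‖riemannZeta (1 + a)‖ ^ 3 * ‖riemannZeta (1 + a + Complex.I * t)‖ ^ 4 *
      ‖riemannZeta (1 + a + 2 * Complex.I * t)‖ := by
  have := DirichletCharacter.norm_LFunction_product_ge_one (N := 1) 1 ha t
  simpa [DirichletCharacter.LFunctionTrivChar, DirichletCharacter.LFunction_modOne_eq] using this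

lemma zeta_norm_eq {s : ℂ} (hs : s ≠ 1) : ‖riemannZeta s‖ = ‖riemannZeta₁ s‖ / ‖s - 1‖ := by
  rw [zeta1_eq hs, norm_mul, mul_div_cancel_left₀]
  rw [norm_ne_zero_iff, sub_ne_zero]; exact hs

lemma hgp_real_le {s : ℂ} (h : s.im = 0) : hgp s ≤ 2 := by
  unfold hgp hgt
  rw [h, abs_zero, zero_add]
  calc (4:ℝ) ^ ((1:ℝ)/100) ≤ 4 ^ ((1:ℝ)/2) := Real.rpow_le_rpow_of_exponent_le (by norm_num) (by norm_num)
    _ = 2 := by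
      rw [← Real.sqrt_eq_rpow, show (4:ℝ) = 2 ^ 2 by norm_num, Real.sqrt_sq (by norm_num)]

lemma hgp_double {s w : ℂ} (h : hgt w ≤ 2 * hgt s) : hgp w ≤ 2 * hgp s := by
  unfold hgp
  have h0 : 0 ≤ hgt s := by linarith [hgt_ge s]
  calc hgt w ^ ((1:ℝ)/100) ≤ (2 * hgt s) ^ ((1:ℝ)/100) :=
        Real.rpow_le_rpow (by linarith [hgt_ge w]) h (by norm_num)
    _ = 2 ^ ((1:ℝ)/100) * hgt s ^ ((1:ℝ)/100) := Real.mul_rpow (by norm_num) h0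
    _ ≤ 2 * hgt s ^ ((1:ℝ)/100) := by
        refine mul_le_mul_of_nonneg_right ?_ (by positivity)
        calc (2:ℝ) ^ ((1:ℝ)/100) ≤ 2 ^ (1:ℝ) := Real.rpow_le_rpow_of_exponent_le (by norm_num) (by norm_num)
          _ = 2 := by norm_num

lemma zeta1_fourth_lower : ∃ B : ℝ, 1 ≤ B ∧ ∀ s : ℂ, ∀ a : ℝ, 0 < a → a ≤ 1 → s.re = 1 + a →
    1 ≤ |s.im| → a ^ 3 * hgt s ^ 4 ≤ B * hgp s * ‖riemannZeta₁ s‖ ^ 4 := by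
  refine ⟨1696 ^ 3 * 625 * 2120, by norm_num, ?_⟩
  intro s a ha ha1 hre him
  have h341 := zeta_three_four_one ha s.im
  have hs : (1:ℂ) + a + Complex.I * s.im = s := by
    apply Complex.ext <;> simp [hre]
  set s2 : ℂ := 1 + a + 2 * Complex.I * s.im with hs2
  have s2re : s2.re = 1 + a := by simp [hs2]
  have s2im : s2.im = 2 * s.im := by simp [hs2]
  rw [hs] at h341
  have hτ := hgt_ge s
  have hM := hgp_ge s
  have hτ5 : hgt s ≤ 5 * |s.im| := by unfold hgt; linarith
  have b1 : ‖riemannZeta (1 + a)‖ ≤ 1696 / a := by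
    have hne : (1:ℂ) + a ≠ 1 := by
      intro h; have := congrArg Complex.re h; simp at this; linarith
    rw [zeta_norm_eq hne]
    have : ‖(1:ℂ) + a - 1‖ = a := by
      rw [add_sub_cancel_left, Complex.norm_real, Real.norm_of_nonneg ha.le]
    rw [this]
    have := zeta1_upper (1 + a) (by simp; linarith) (by simp; linarith)
    have h4 : hgt (1 + a) = 4 := by simp [hgt]
    have h5 : hgp (1 + a) ≤ 2 := hgp_real_le (by simp)
    rw [h4] at this
    gcongr
    linarith
  have b2 : ‖riemannZeta s‖ ≤ 5 * ‖riemannZeta₁ s‖ / hgt s := by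
    have hne : s ≠ 1 := by
      intro h; rw [h] at him; simp at him; linarith
    rw [zeta_norm_eq hne]
    have h1 : |s.im| ≤ ‖s - 1‖ := by
      have := Complex.abs_im_le_norm (s - 1); simpa using this
    rw [div_le_div_iff₀ (by linarith) (by linarith)]
    have := norm_nonneg (riemannZeta₁ s)
    nlinarith
  have b3 : ‖riemannZeta s2‖ ≤ 2120 * hgp s := by
    have hne : s2 ≠ 1 := by
      intro h; rw [h] at s2im; simp at s2im; rw [s2im] at him; simp at him; linarith
    rw [zeta_norm_eq hne]
    have h1 : 2 * |s.im| ≤ ‖s2 - 1‖ := by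
      have := Complex.abs_im_le_norm (s2 - 1)
      rw [Complex.sub_im, s2im, Complex.one_im, sub_zero, abs_mul, abs_two] at this
      exact this
    have h2 : hgt s2 ≤ 2 * hgt s := by
      unfold hgt; rw [s2im, abs_mul, abs_two]; linarith
    have h3 := hgp_double h2
    rw [div_le_iff₀ (by linarith)]
    refine (zeta1_upper s2 (by linarith) (by linarith)).trans ?_
    have h5 : hgt s2 * hgp s2 ≤ (2 * hgt s) * (2 * hgp s) :=
      mul_le_mul h2 h3 (by linarith [hgp_ge s2]) (by linarith)
    have h6 : 2120 * hgp s * (2 / 5 * hgt s) ≤ 2120 * hgp s * ‖s2 - 1‖ := by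
      gcongr; linarith
    linarith
  have : 1 ≤ (1696 / a) ^ 3 * (5 * ‖riemannZeta₁ s‖ / hgt s) ^ 4 * (2120 * hgp s) := by
    refine h341.trans ?_
    gcongr
  have hpos : 0 < a ^ 3 * hgt s ^ 4 := by positivity
  have e : (1696 / a) ^ 3 * (5 * ‖riemannZeta₁ s‖ / hgt s) ^ 4 * (2120 * hgp s) =
      (1696 ^ 3 * 625 * 2120 * hgp s * ‖riemannZeta₁ s‖ ^ 4) / (a ^ 3 * hgt s ^ 4) := by
    field_simp; norm_num; ring
  rw [e, le_div_iff₀ hpos, one_mul] at this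
  exact this

lemma zeta1_ne_zero {s : ℂ} (h : 1 ≤ s.re) : riemannZeta₁ s ≠ 0 := by
  by_cases hs : s = 1
  · rw [hs, riemannZeta₁_one]; exact one_ne_zero
  · rw [zeta1_eq hs]
    exact mul_ne_zero (sub_ne_zero.mpr hs) (riemannZeta_ne_zero_of_one_le_re h)

lemma zeta1_lower : ∃ c : ℝ, 0 < c ∧ ∀ s : ℂ, 1 ≤ s.re → s.re ≤ 2 →
    c * hgt s ≤ hgp s ^ 4 * ‖riemannZeta₁ s‖ := by
  obtain ⟨B, hB, h341⟩ := zeta1_fourth_lower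
  -- compact part
  have hcomp : IsCompact ((Set.Icc (1:ℝ) 2) ×ℂ (Set.Icc (-1:ℝ) 1)) := isCompact_Icc.reProdIm isCompact_Icc
  have hne : ((Set.Icc (1:ℝ) 2) ×ℂ (Set.Icc (-1:ℝ) 1)).Nonempty := ⟨1, by simp [Complex.mem_reProdIm]⟩
  obtain ⟨s0, hs0, hmin⟩ := hcomp.exists_isMinOn hne (differentiable_riemannZeta₁.continuous.norm.continuousOn)
  set m0 := ‖riemannZeta₁ s0‖ with hm0
  have hm0p : 0 < m0 := norm_pos_iff.mpr (zeta1_ne_zero (by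
    rw [Complex.mem_reProdIm] at hs0; exact hs0.1.1))
  set l : ℝ := 1 / (2 * 400000 * B) with hl
  have hlp : 0 < l := by positivity
  have hl1 : l ≤ 1 := by
    rw [hl, div_le_one (by positivity)]; linarith
  have hlD : 400000 * l = 1 / (2 * B) := by rw [hl]; field_simp
  refine ⟨min (m0 / 5) (l ^ 3 / (2 * B)), by positivity, ?_⟩
  intro s hs1 hs2
  have hM := hgp_ge s
  have hτ := hgt_ge s
  set M := hgp s with hMdef
  set τ := hgt s with hτdef
  have hM4 : 1 ≤ M ^ 4 := one_le_pow₀ hM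
  rcases le_total |s.im| 1 with him | him
  · have h1 : m0 ≤ ‖riemannZeta₁ s‖ := by
      refine hmin ?_
      rw [Complex.mem_reProdIm]
      exact ⟨⟨hs1, hs2⟩, abs_le.mp him⟩
    have h2 : τ ≤ 5 := by rw [hτdef, hgt]; linarith
    calc min (m0 / 5) (l ^ 3 / (2 * B)) * τ ≤ m0 / 5 * 5 := by
          refine mul_le_mul (min_le_left _ _) h2 (by linarith) (by positivity)
      _ = 1 * m0 := by ring
      _ ≤ M ^ 4 * ‖riemannZeta₁ s‖ := mul_le_mul hM4 h1 hm0p.le (by positivity)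
  · suffices l ^ 3 / (2 * B) * τ ≤ M ^ 4 * ‖riemannZeta₁ s‖ by
      refine le_trans ?_ this
      exact mul_le_mul_of_nonneg_right (min_le_right _ _) (by linarith)
    -- key: for points with re ≥ 1 + l^4/M^5
    have key : ∀ w : ℂ, w.im = s.im → 1 + l ^ 4 / M ^ 5 ≤ w.re → w.re ≤ 2 →
        l ^ 3 / B * τ ≤ M ^ 4 * ‖riemannZeta₁ w‖ := by
      intro w hw hw1 hw2
      have hτw : hgt w = τ := by rw [hτdef]; unfold hgt; rw [hw]
      have hMw : hgp w = M := by rw [hMdef]; unfold hgp; rw [hτw]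
      have ha0 : 0 < l ^ 4 / M ^ 5 := by positivity
      have := h341 w (w.re - 1) (by linarith) (by linarith) (by ring) (by rw [hw]; exact him)
      rw [hτw, hMw] at this
      have h3 : (l ^ 4 / M ^ 5) ^ 3 ≤ (w.re - 1) ^ 3 := by gcongr; linarith
      have h4 : (l ^ 4 / M ^ 5) ^ 3 * τ ^ 4 ≤ B * M * ‖riemannZeta₁ w‖ ^ 4 :=
        (mul_le_mul_of_nonneg_right h3 (by positivity)).trans this
      have h5 : (l ^ 3 * τ) ^ 4 ≤ B * (M ^ 4 * ‖riemannZeta₁ w‖) ^ 4 := by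
        have e1 : (l ^ 3 * τ) ^ 4 = M ^ 15 * ((l ^ 4 / M ^ 5) ^ 3 * τ ^ 4) := by
          field_simp
        have e2 : B * (M ^ 4 * ‖riemannZeta₁ w‖) ^ 4 = M ^ 15 * (B * M * ‖riemannZeta₁ w‖ ^ 4) := by ring
        rw [e1, e2]; gcongr
      have h6 : (l ^ 3 / B * τ) ^ 4 ≤ (M ^ 4 * ‖riemannZeta₁ w‖) ^ 4 := by
        have e1 : (l ^ 3 / B * τ) ^ 4 = (l ^ 3 * τ) ^ 4 / B ^ 4 := by field_simp
        rw [e1, div_le_iff₀ (by positivity)]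
        refine h5.trans ?_
        rw [mul_comm]
        have : B ≤ B ^ 4 := le_self_pow₀ hB (by norm_num)
        gcongr
      exact le_of_pow_le_pow_left₀ (by norm_num) (by positivity) h6
    rcases le_total (1 + l ^ 4 / M ^ 5) s.re with hc | hc
    · refine le_trans ?_ (key s rfl hc hs2)
      refine mul_le_mul_of_nonneg_right ?_ (by linarith)
      gcongr
      linarith
    · set w : ℂ := ⟨1 + l ^ 4 / M ^ 5, s.im⟩ with hw
      have ha1 : l ^ 4 / M ^ 5 ≤ 1 := by
        rw [div_le_one (by positivity)]
        exact (pow_le_one₀ hlp.le hl1).trans (one_le_pow₀ hM)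
      have hk := key w rfl le_rfl (by simp only [hw]; linarith)
      have hlip : ‖riemannZeta₁ w - riemannZeta₁ s‖ ≤ 400000 * (τ * M) * ‖w - s‖ := by
        have hconv : Convex ℝ ((Set.Icc (1:ℝ) 2) ×ℂ ({s.im} : Set ℝ)) :=
          ((convex_Icc (1:ℝ) 2).linear_preimage Complex.reLm).inter
            ((convex_singleton s.im).linear_preimage Complex.imLm)
        refine hconv.norm_image_sub_le_of_norm_deriv_le (𝕜 := ℂ) (fun z _ => differentiable_riemannZeta₁ z) ?_ ?_ ?_
        · intro z hz
          rw [Complex.mem_reProdIm] at hz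
          have hz2 : z.im = s.im := hz.2
          have := zeta1_deriv_upper z (by linarith [hz.1.1]) (by linarith [hz.1.2])
          have hτw : hgt z = τ := by rw [hτdef]; unfold hgt; rw [hz2]
          have hMw : hgp z = M := by rw [hMdef]; unfold hgp; rw [hτw]
          rw [hτw, hMw] at this
          exact this
        · rw [Complex.mem_reProdIm]; exact ⟨⟨hs1, hs2⟩, rfl⟩
        · rw [Complex.mem_reProdIm]
          refine ⟨⟨?_, ?_⟩, rfl⟩
          · simp only [hw]; have : 0 ≤ l ^ 4 / M ^ 5 := by positivity
            linarith
          · simp only [hw]; linarith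
      have hws : ‖w - s‖ ≤ l ^ 4 / M ^ 5 := by
        refine (Complex.norm_le_abs_re_add_abs_im _).trans ?_
        simp only [hw, Complex.sub_re, Complex.sub_im, sub_self, abs_zero, add_zero]
        rw [abs_of_nonneg (by linarith)]; linarith
      have hlip2 : M ^ 4 * ‖riemannZeta₁ w - riemannZeta₁ s‖ ≤ l ^ 3 / (2 * B) * τ := by
        calc M ^ 4 * ‖riemannZeta₁ w - riemannZeta₁ s‖ ≤ M ^ 4 * (400000 * (τ * M) * (l ^ 4 / M ^ 5)) := by
              gcongr; exact hlip.trans (by gcongr)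
          _ = (400000 * l) * l ^ 3 * τ := by field_simp
          _ = l ^ 3 / (2 * B) * τ := by rw [hlD]; ring
      have h8 : ‖riemannZeta₁ w‖ ≤ ‖riemannZeta₁ s‖ + ‖riemannZeta₁ w - riemannZeta₁ s‖ := by
        have := norm_sub_norm_le (riemannZeta₁ w) (riemannZeta₁ s); linarith
      have h9 : M ^ 4 * ‖riemannZeta₁ w‖ ≤ M ^ 4 * ‖riemannZeta₁ s‖ + M ^ 4 * ‖riemannZeta₁ w - riemannZeta₁ s‖ := by
        rw [← mul_add]; gcongr
      have h10 : l ^ 3 / B * τ = l ^ 3 / (2 * B) * τ + l ^ 3 / (2 * B) * τ := by field_simp; norm_num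
      linarith

lemma zeta1_lower_disc : ∃ c r : ℝ, 0 < c ∧ 0 < r ∧ ∀ s : ℂ, 1 ≤ s.re → s.re ≤ 2 →
    ∀ w : ℂ, ‖w - s‖ ≤ r / hgp s ^ 5 → c * hgt s ≤ hgp s ^ 4 * ‖riemannZeta₁ w‖ := by
  obtain ⟨c, hc, hlow⟩ := zeta1_lower
  refine ⟨c / 2, min (1/400) (c / (2 * 1600000)), by positivity, by positivity, ?_⟩
  intro s hs1 hs2 w hw
  have hM := hgp_ge s
  have hτ := hgt_ge s
  have h0 := hlow s hs1 hs2
  set M := hgp s with hMdef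
  set τ := hgt s with hτdef
  set r := min (1/400) (c / (2 * 1600000)) with hr
  have hrp : 0 < r := by positivity
  have hr1 : r ≤ 1/400 := min_le_left _ _
  have hr2 : r ≤ c / (2 * 1600000) := min_le_right _ _
  have hM5 : 1 ≤ M ^ 5 := one_le_pow₀ hM
  have hrM : r / M ^ 5 ≤ 1/400 := (div_le_self hrp.le hM5).trans hr1
  have hlip : ‖riemannZeta₁ w - riemannZeta₁ s‖ ≤ 1600000 * (τ * M) * ‖w - s‖ := by
    have hconv : Convex ℝ (Metric.closedBall s (1/400)) := convex_closedBall _ _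
    refine hconv.norm_image_sub_le_of_norm_deriv_le (𝕜 := ℂ) (fun z _ => differentiable_riemannZeta₁ z) ?_ ?_ ?_
    · intro z hz
      rw [mem_closedBall_iff_norm] at hz
      have hre := (Complex.abs_re_le_norm (z - s)).trans hz
      rw [Complex.sub_re, abs_le] at hre
      have := zeta1_deriv_upper z (by linarith [hre.1]) (by linarith [hre.2])
      refine this.trans ?_
      have hz1 : ‖z - s‖ ≤ 1 := hz.trans (by norm_num)
      have : hgt z * hgp z ≤ (2 * τ) * (2 * M) :=
        mul_le_mul (hgt_near hz1) (hgp_near hz1) (by linarith [hgp_ge z]) (by linarith)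
      linarith
    · simp
    · rw [mem_closedBall_iff_norm]; exact hw.trans hrM
  have hlip2 : M ^ 4 * ‖riemannZeta₁ w - riemannZeta₁ s‖ ≤ c / 2 * τ := by
    calc M ^ 4 * ‖riemannZeta₁ w - riemannZeta₁ s‖ ≤ M ^ 4 * (1600000 * (τ * M) * (r / M ^ 5)) := by
          gcongr; exact hlip.trans (by gcongr)
      _ = (1600000 * r) * τ := by field_simp
      _ ≤ c / 2 * τ := by gcongr; linarith
  have h8 : ‖riemannZeta₁ s‖ ≤ ‖riemannZeta₁ w‖ + ‖riemannZeta₁ w - riemannZeta₁ s‖ := by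
    have := norm_sub_norm_le (riemannZeta₁ s) (riemannZeta₁ w)
    rw [norm_sub_rev] at this; linarith
  have h9 : M ^ 4 * ‖riemannZeta₁ s‖ ≤ M ^ 4 * ‖riemannZeta₁ w‖ + M ^ 4 * ‖riemannZeta₁ w - riemannZeta₁ s‖ := by
    rw [← mul_add]; gcongr
  linarith

/-- Third derivative bound for `1/((s-1)ζ(s))`. -/
lemma invZeta1_third_deriv : ∃ C : ℝ, 0 < C ∧ ∀ s : ℂ, 1 ≤ s.re → s.re ≤ 2 →
    ‖iteratedDeriv 3 (fun z => (riemannZeta₁ z)⁻¹) s‖ ≤ C * hgt s ^ (-(81:ℝ)/100) := by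
  obtain ⟨c, r, hc, hr, h⟩ := zeta1_lower_disc
  refine ⟨6 / (c * r ^ 3), by positivity, ?_⟩
  intro s hs1 hs2
  have hM := hgp_ge s
  have hτ := hgt_ge s
  have h0 := h s hs1 hs2
  have hrp : 0 < r / hgp s ^ 5 := by positivity
  have hne : ∀ w ∈ Metric.closedBall s (r / hgp s ^ 5), riemannZeta₁ w ≠ 0 := by
    intro w hw h1
    rw [mem_closedBall_iff_norm] at hw
    have := h0 w hw
    rw [h1, norm_zero, mul_zero] at this
    have : 0 < c * hgt s := by positivity
    linarith
  have := Complex.norm_iteratedDeriv_le_of_forall_mem_sphere_norm_le (c := s) (R := r / hgp s ^ 5)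
    (C := hgp s ^ 4 / (c * hgt s)) (f := fun z => (riemannZeta₁ z)⁻¹) 3 hrp (by
      refine DifferentiableOn.diffContOnCl ?_
      rw [closure_ball _ hrp.ne']
      intro w hw
      exact ((differentiable_riemannZeta₁ w).inv (hne w hw)).differentiableWithinAt) (by
      intro z hz
      rw [mem_sphere_iff_norm] at hz
      have h2 := h0 z hz.le
      rw [norm_inv, inv_eq_one_div, div_le_div_iff₀ (norm_pos_iff.mpr (hne z (by
        rw [mem_closedBall_iff_norm]; exact hz.le))) (by positivity), one_mul]
      exact h2)
  refine this.trans (le_of_eq ?_)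
  have e : hgt s ^ (-(81:ℝ)/100) = hgp s ^ 19 / hgt s := by
    unfold hgp
    rw [← Real.rpow_natCast, ← Real.rpow_mul (by linarith), eq_div_iff (by linarith)]
    nth_rewrite 2 [← Real.rpow_one (hgt s)]
    rw [← Real.rpow_add (by linarith)]
    norm_num
  rw [e]
  have : ((Nat.factorial 3 : ℕ) : ℝ) = 6 := by norm_num [Nat.factorial]
  rw [this]
  have : hgp s ≠ 0 := by linarith
  field_simp


/-- partial sums of `μ(n)/n` -/
noncomputable def gmu (t : ℝ) : ℝ := ∑ n ∈ Finset.Icc 1 ⌊t⌋₊, (moebius n : ℝ) / n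

lemma moebius_abs_le_one (n : ℕ) : |(moebius n : ℝ)| ≤ 1 := by
  have : |moebius n| ≤ 1 := abs_moebius_le_one
  exact_mod_cast this

lemma sum_moebius_mul_floor (N : ℕ) (hN : 1 ≤ N) :
    ∑ n ∈ Finset.Icc 1 N, (moebius n : ℝ) * ((N / n : ℕ) : ℝ) = 1 := by
  have h := ArithmeticFunction.sum_Ioc_mul_zeta_eq_sum (R := ℤ) moebius N
  rw [moebius_mul_coe_zeta] at h
  have h1 : ∑ n ∈ Finset.Ioc 0 N, (1 : ArithmeticFunction ℤ) n = 1 := by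
    rw [Finset.sum_eq_single 1]
    · simp
    · intro b _ hb; exact ArithmeticFunction.one_apply_ne hb
    · intro h; simp at h; omega
  rw [h1] at h
  have h2 : Finset.Icc 1 N = Finset.Ioc 0 N := by ext; simp; omega
  rw [h2]
  have := congrArg (fun z : ℤ => (z:ℝ)) h
  push_cast at this
  rw [this]
  refine Finset.sum_congr rfl fun n hn => ?_
  rfl

lemma gmu_nat_le (N : ℕ) : |∑ n ∈ Finset.Icc 1 N, (moebius n : ℝ) / n| ≤ 1 := by
  rcases Nat.eq_zero_or_pos N with h | h
  · simp [h]
  have hN : (0:ℝ) < N := by exact_mod_cast h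
  have e : (N:ℝ) * ∑ n ∈ Finset.Icc 1 N, (moebius n : ℝ) / n =
      1 + ∑ n ∈ Finset.Icc 1 N, (moebius n : ℝ) * ((N:ℝ)/n - ((N / n : ℕ) : ℝ)) := by
    rw [← sum_moebius_mul_floor N h, ← Finset.sum_add_distrib, Finset.mul_sum]
    refine Finset.sum_congr rfl fun n hn => ?_
    ring
  have hb : |∑ n ∈ Finset.Icc 1 N, (moebius n : ℝ) * ((N:ℝ)/n - ((N / n : ℕ) : ℝ))| ≤ N - 1 := by
    have : Finset.Icc 1 N = insert N (Finset.Icc 1 (N-1)) := by ext; simp; omega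
    rw [this, Finset.sum_insert (by simp; omega)]
    have h0 : (moebius N : ℝ) * ((N:ℝ)/N - ((N / N : ℕ) : ℝ)) = 0 := by
      rw [Nat.div_self h, div_self hN.ne']; simp
    rw [h0, zero_add]
    refine (Finset.abs_sum_le_sum_abs _ _).trans ?_
    have : ∀ n ∈ Finset.Icc 1 (N-1), |(moebius n : ℝ) * ((N:ℝ)/n - ((N / n : ℕ) : ℝ))| ≤ 1 := by
      intro n hn
      rw [abs_mul]
      have h1 : 0 ≤ (N:ℝ)/n - ((N / n : ℕ) : ℝ) := sub_nonneg.mpr Nat.cast_div_le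
      have h2 : (N:ℝ)/n - ((N / n : ℕ) : ℝ) ≤ 1 := by
        rw [← Nat.floor_div_eq_div (K := ℝ)]
        have := Nat.lt_floor_add_one ((N:ℝ)/n); linarith
      rw [abs_of_nonneg h1]
      exact mul_le_one₀ (moebius_abs_le_one n) h1 h2
    refine (Finset.sum_le_sum this).trans ?_
    simp
    rw [Nat.cast_sub h]; simp
  have : N * |∑ n ∈ Finset.Icc 1 N, (moebius n : ℝ) / n| ≤ N * 1 := by
    rw [← abs_of_pos hN, ← abs_mul, abs_of_pos hN, e]
    refine (abs_add_le _ _).trans ?_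
    rw [abs_one]; linarith
  exact le_of_mul_le_mul_left this hN

lemma gmu_abs_le (t : ℝ) : |gmu t| ≤ 1 := gmu_nat_le _

lemma gmu_measurable : Measurable gmu := by
  have : gmu = (fun N : ℕ => ∑ n ∈ Finset.Icc 1 N, (moebius n : ℝ) / n) ∘ (fun t : ℝ => ⌊t⌋₊) := rfl
  rw [this]
  exact (measurable_from_top).comp Nat.measurable_floor

lemma gmu_lt_one {t : ℝ} (ht : t < 1) : gmu t = 0 := by
  unfold gmu
  have : ⌊t⌋₊ = 0 := Nat.floor_eq_zero.mpr ht
  rw [this]; simp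

/-- Functions of subpolynomial growth supported on `[1,∞)`. -/
structure Tame (f : ℝ → ℂ) : Prop where
  meas : Measurable f
  zero : ∀ t, t < 1 → f t = 0
  bound : ∀ ε : ℝ, 0 < ε → ∃ C : ℝ, ∀ t, 1 ≤ t → ‖f t‖ ≤ C * t ^ ε

lemma tame_gmu : Tame (fun t => (gmu t : ℂ)) where
  meas := Complex.measurable_ofReal.comp gmu_measurable
  zero := fun t ht => by simp [gmu_lt_one ht]
  bound := fun ε hε => ⟨1, fun t ht => by
    rw [Complex.norm_real, Real.norm_eq_abs, one_mul]
    exact (gmu_abs_le t).trans (Real.one_le_rpow ht hε.le)⟩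

lemma Tame.log_smul {f : ℝ → ℂ} (hf : Tame f) : Tame (fun t => Real.log t • f t) where
  meas := Real.measurable_log.smul hf.meas
  zero := fun t ht => by simp [hf.zero t ht]
  bound := fun ε hε => by
    obtain ⟨C, hC⟩ := hf.bound (ε/2) (by linarith)
    refine ⟨C * (2 / ε), fun t ht => ?_⟩
    rw [norm_smul, Real.norm_of_nonneg (Real.log_nonneg ht)]
    have h1 := hC t ht
    have h2 : Real.log t ≤ t ^ (ε/2) / (ε/2) := Real.log_le_rpow_div (by linarith) (by linarith)
    calc Real.log t * ‖f t‖ ≤ (t ^ (ε/2) / (ε/2)) * (C * t ^ (ε/2)) := by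
          gcongr
      _ = C * (2/ε) * (t ^ (ε/2) * t ^ (ε/2)) := by field_simp
      _ = C * (2/ε) * t ^ ε := by
          rw [← Real.rpow_add (by linarith)]; congr 2; ring

lemma Tame.locInt {f : ℝ → ℂ} (hf : Tame f) : MeasureTheory.LocallyIntegrableOn f (Set.Ioi 0) := by
  obtain ⟨C, hC⟩ := hf.bound 1 one_pos
  have : MeasureTheory.LocallyIntegrable (fun t : ℝ => C * t) :=
    (continuous_const.mul continuous_id).locallyIntegrable
  refine (this.mono hf.meas.aestronglyMeasurable ?_).locallyIntegrableOn _
  filter_upwards with t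
  rcases lt_or_ge t 1 with h | h
  · rw [hf.zero t h, norm_zero]; exact norm_nonneg _
  · have := hC t h
    rw [Real.rpow_one] at this
    exact this.trans (Real.le_norm_self _)

lemma Tame.top {f : ℝ → ℂ} (hf : Tame f) {a : ℝ} (ha : a < 0) :
    f =O[Filter.atTop] (fun t : ℝ => t ^ (-a)) := by
  obtain ⟨C, hC⟩ := hf.bound (-a) (by linarith)
  refine Asymptotics.IsBigO.of_bound C ?_
  filter_upwards [Filter.eventually_ge_atTop 1] with t ht
  have h0 : 0 ≤ t ^ (-a) := Real.rpow_nonneg (by linarith) _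
  rw [Real.norm_of_nonneg h0]
  exact hC t ht

lemma Tame.bot {f : ℝ → ℂ} (hf : Tame f) (b : ℝ) :
    f =O[nhdsWithin 0 (Set.Ioi 0)] (fun t : ℝ => t ^ (-b)) := by
  refine Asymptotics.IsBigO.of_bound 1 ?_
  have : ∀ᶠ t : ℝ in nhdsWithin 0 (Set.Ioi 0), t < 1 :=
    nhdsWithin_le_nhds (eventually_lt_nhds one_pos)
  filter_upwards [this] with t ht
  rw [hf.zero t ht]; simp only [norm_zero]; positivity

lemma Tame.convergent {f : ℝ → ℂ} (hf : Tame f) {s : ℂ} (hs : s.re < 0) : MellinConvergent f s :=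
  mellinConvergent_of_isBigO_rpow (a := s.re/2) (b := s.re - 1) hf.locInt (hf.top (by linarith))
    (by linarith) (hf.bot _) (by linarith)

lemma Tame.hasDeriv {f : ℝ → ℂ} (hf : Tame f) {s : ℂ} (hs : s.re < 0) :
    HasDerivAt (mellin f) (mellin (fun t => Real.log t • f t) s) s :=
  (mellin_hasDerivAt_of_isBigO_rpow (a := s.re/2) (b := s.re - 1) hf.locInt (hf.top (by linarith))
    (by linarith) (hf.bot _) (by linarith)).2

lemma mellin_gmu {w : ℂ} (hw : 0 < w.re) : mellin (fun t => (gmu t : ℂ)) (-w) = (riemannZeta₁ (1 + w))⁻¹ := by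
  have hw0 : w ≠ 0 := by intro h; rw [h] at hw; simp at hw
  have hw1 : 1 < (1 + w).re := by simp; exact hw
  have hterm : ∀ n, LSeries.term (fun n => (moebius n : ℂ) / n) w n = LSeries.term (fun n => (moebius n : ℂ)) (1 + w) n := by
    intro n
    rcases Nat.eq_zero_or_pos n with h | h
    · simp [h]
    · have hn : (n:ℂ) ≠ 0 := by exact_mod_cast h.ne'
      rw [LSeries.term_of_ne_zero h.ne', LSeries.term_of_ne_zero h.ne', Complex.cpow_add _ _ hn,
        Complex.cpow_one, div_div]
  have hsum : LSeriesSummable (fun n => (moebius n : ℂ) / n) w := by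
    have h1 : LSeriesSummable (fun n => (moebius n : ℂ)) (1 + w) := LSeriesSummable_moebius_iff.mpr hw1
    exact (summable_congr hterm).mpr h1
  have hL : LSeries (fun n => (moebius n : ℂ) / n) w = LSeries (fun n => (moebius n : ℂ)) (1 + w) :=
    tsum_congr hterm
  have hcast : ∀ N : ℕ, ∑ k ∈ Finset.Icc 1 N, (moebius k : ℂ) / k = ((∑ k ∈ Finset.Icc 1 N, (moebius k : ℝ) / k : ℝ) : ℂ) := by
    intro N; push_cast; rfl
  have h_int := LSeries_eq_mul_integral (fun n => (moebius n : ℂ) / n) le_rfl hw hsum (by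
    refine Asymptotics.IsBigO.of_bound 1 ?_
    filter_upwards with n
    rw [hcast, Complex.norm_real, Real.norm_eq_abs]
    simpa using gmu_nat_le n)
  have hm : mellin (fun t => (gmu t : ℂ)) (-w) = ∫ t in Set.Ioi (1:ℝ), (∑ k ∈ Finset.Icc 1 ⌊t⌋₊, (moebius k : ℂ) / k) * (t:ℂ) ^ (-(w+1)) := by
    unfold mellin
    have h : ∀ t : ℝ, (t:ℂ) ^ (-w - 1) • (gmu t : ℂ) =
        Set.indicator (Set.Ici (1:ℝ)) (fun t : ℝ => (∑ k ∈ Finset.Icc 1 ⌊t⌋₊, (moebius k : ℂ) / k) * (t:ℂ) ^ (-(w+1))) t := by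
      intro t
      unfold Set.indicator
      split_ifs with h
      · beta_reduce
        rw [smul_eq_mul, mul_comm, hcast, show -(w+1) = -w - 1 by ring]; rfl
      · rw [gmu_lt_one (by simpa using h)]; simp
    simp_rw [h]
    rw [MeasureTheory.setIntegral_indicator measurableSet_Ici]
    have : Set.Ioi (0:ℝ) ∩ Set.Ici 1 = Set.Ici 1 := by
      ext t; simp; intro h; linarith
    rw [this, MeasureTheory.integral_Ici_eq_integral_Ioi]
  rw [← hm, hL] at h_int
  have hz : riemannZeta (1 + w) * LSeries (fun n => (moebius n : ℂ)) (1 + w) = 1 :=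
    by
      have := LSeries_zeta_mul_Lseries_moebius hw1
      rw [LSeries_zeta_eq_riemannZeta hw1] at this
      exact this
  rw [zeta1_eq (by simpa using hw0), add_sub_cancel_left]
  rw [h_int] at hz
  have hne : riemannZeta (1 + w) ≠ 0 := left_ne_zero_of_mul_eq_one hz
  refine eq_inv_of_mul_eq_one_left ?_
  linear_combination hz

/-- `log³ · g` -/
noncomputable def lg3 (t : ℝ) : ℂ := Real.log t • Real.log t • Real.log t • (gmu t : ℂ)

lemma tame_lg3 : Tame lg3 := tame_gmu.log_smul.log_smul.log_smul

lemma mellin_lg3 {s : ℂ} (hs : s.re < 0) :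
    mellin lg3 s = - iteratedDeriv 3 (fun z => (riemannZeta₁ z)⁻¹) (1 - s) := by
  have hU : IsOpen {z : ℂ | z.re < 0} := isOpen_lt Complex.continuous_re continuous_const
  have step : ∀ f : ℝ → ℂ, Tame f → ∀ F : ℂ → ℂ, Set.EqOn F (mellin f) {z : ℂ | z.re < 0} →
      Set.EqOn (deriv F) (mellin (fun t => Real.log t • f t)) {z : ℂ | z.re < 0} := by
    intro f hf F hF z hz
    have : F =ᶠ[nhds z] mellin f := hF.eventuallyEq_of_mem (hU.mem_nhds hz)
    rw [this.deriv_eq]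
    exact (hf.hasDeriv hz).deriv
  set R : ℂ → ℂ := fun z => (riemannZeta₁ z)⁻¹ with hR
  have h0 : Set.EqOn (fun z => R (1 - z)) (mellin (fun t => (gmu t : ℂ))) {z : ℂ | z.re < 0} := by
    intro z hz
    have hz : z.re < 0 := hz
    have := mellin_gmu (w := -z) (by simpa using hz)
    rw [neg_neg] at this
    rw [this, hR]; simp [sub_eq_add_neg]
  have h1 := step _ tame_gmu _ h0
  have h2 := step _ tame_gmu.log_smul _ h1
  have h3 := step _ tame_gmu.log_smul.log_smul _ h2
  have h4 : iteratedDeriv 3 (fun z => R (1 - z)) s = mellin lg3 s := by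
    rw [iteratedDeriv_succ, iteratedDeriv_succ, iteratedDeriv_succ, iteratedDeriv_zero]
    exact h3 hs
  rw [← h4, iteratedDeriv_comp_const_sub]
  simp only [smul_eq_mul]
  ring

section
open scoped FourierTransform SchwartzMap

/-- exponentially damped version of `lg3` in logarithmic coordinate -/
noncomputable def hEps (ε u : ℝ) : ℂ := Real.exp (ε * u) • lg3 (Real.exp (-u))

lemma hEps_integrable {ε : ℝ} (hε : 0 < ε) : MeasureTheory.Integrable (hEps ε) := by
  obtain ⟨C, hC⟩ := tame_lg3.bound (ε/2) (by linarith)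
  have hb : MeasureTheory.IntegrableOn (fun u : ℝ => C * Real.exp (ε/2 * u)) (Set.Iic 0) :=
    (integrableOn_exp_mul_Iic (by linarith) 0).const_mul C
  have hmeas : Measurable (hEps ε) := by
    unfold hEps
    exact (by fun_prop : Measurable fun u : ℝ => Real.exp (ε * u)).smul
      (tame_lg3.meas.comp (by fun_prop))
  have h0 : ∀ u, u ∉ Set.Iic (0:ℝ) → hEps ε u = 0 := by
    intro u hu
    unfold hEps
    rw [tame_lg3.zero, smul_zero]
    rw [Real.exp_lt_one_iff]; simp at hu ⊢; exact hu
  rw [← MeasureTheory.integrableOn_iff_integrable_of_support_subset (s := Set.Iic (0:ℝ))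
    (fun u hu => by by_contra h; exact hu (h0 u h))]
  refine MeasureTheory.Integrable.mono' hb hmeas.aestronglyMeasurable ?_
  filter_upwards [MeasureTheory.ae_restrict_mem measurableSet_Iic] with u hu
  have hu : u ≤ 0 := hu
  have := hC (Real.exp (-u)) (by rw [Real.one_le_exp_iff]; linarith)
  unfold hEps
  rw [norm_smul, Real.norm_of_nonneg (Real.exp_pos _).le]
  calc Real.exp (ε * u) * ‖lg3 (Real.exp (-u))‖ ≤ Real.exp (ε * u) * (C * Real.exp (-u) ^ (ε/2)) := by
        gcongr
    _ = C * Real.exp (ε/2 * u) := by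
        rw [← Real.exp_mul, mul_left_comm, ← Real.exp_add]; congr 2; ring

lemma hEps_fourier {ε : ℝ} (hε : 0 < ε) (ξ : ℝ) :
    𝓕 (hEps ε) ξ = - iteratedDeriv 3 (fun z => (riemannZeta₁ z)⁻¹) (1 - ⟨-ε, 2 * π * ξ⟩) := by
  rw [← mellin_lg3 (s := ⟨-ε, 2 * π * ξ⟩) (by simpa using hε), mellin_eq_fourier]
  have : (2 * π * ξ) / (2 * π) = ξ := by field_simp
  simp only [neg_neg, this]
  rfl

lemma smoothing : ∃ K : ℝ, 0 < K ∧ ∀ ε : ℝ, 0 < ε → ε ≤ 1 → ∀ φ : 𝓢(ℝ, ℂ), ∀ l : ℝ, 0 < l →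
    ‖∫ u, hEps ε u * φ u‖ ≤ l * K + (∫ u, ‖φ u‖ ^ 2) / l := by
  obtain ⟨C, hC, hbound⟩ := invZeta1_third_deriv
  have hDi : MeasureTheory.Integrable (fun ξ : ℝ => C ^ 2 * (1 + ‖ξ‖) ^ (-(162:ℝ)/100)) := by
    have := integrable_one_add_norm (E := ℝ) (μ := MeasureTheory.volume) (r := (162:ℝ)/100) (by simp; norm_num)
    rw [neg_div]
    exact this.const_mul _
  set K := ∫ ξ : ℝ, C ^ 2 * (1 + ‖ξ‖) ^ (-(162:ℝ)/100) with hK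
  refine ⟨K + 1, ?_, ?_⟩
  · have : 0 ≤ K := MeasureTheory.integral_nonneg fun ξ => by positivity
    linarith
  intro ε hε hε1 φ l hl
  have hF : ∀ ξ : ℝ, ‖𝓕 (hEps ε) ξ‖ ^ 2 ≤ C ^ 2 * (1 + ‖ξ‖) ^ (-(162:ℝ)/100) := by
    intro ξ
    rw [hEps_fourier hε, norm_neg]
    set s : ℂ := 1 - ⟨-ε, 2 * π * ξ⟩ with hs
    have hre : s.re = 1 + ε := by simp [hs]
    have him : s.im = - (2 * π * ξ) := by simp [hs]
    have h1 := hbound s (by linarith) (by linarith)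
    have h2 : 1 + ‖ξ‖ ≤ hgt s := by
      unfold hgt
      rw [him, abs_neg, abs_mul, abs_of_pos (by positivity : (0:ℝ) < 2 * π), Real.norm_eq_abs]
      have := Real.pi_gt_three
      have := abs_nonneg ξ
      nlinarith
    have h3 : hgt s ^ (-(81:ℝ)/100) ≤ (1 + ‖ξ‖) ^ (-(81:ℝ)/100) :=
      Real.rpow_le_rpow_of_nonpos (by positivity) h2 (by norm_num)
    have h4 : ((1 + ‖ξ‖) ^ (-(81:ℝ)/100)) ^ 2 = (1 + ‖ξ‖) ^ (-(162:ℝ)/100) := by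
      rw [← Real.rpow_natCast, ← Real.rpow_mul (by positivity)]; norm_num
    rw [← h4, ← mul_pow]
    gcongr
    exact h1.trans (by gcongr)
  set ψ : 𝓢(ℝ, ℂ) := 𝓕⁻ φ with hψ
  have hφ : 𝓕 ψ = φ := FourierTransform.fourier_fourierInv_eq φ
  have hsw : ∫ ξ, 𝓕 (hEps ε) ξ * ψ ξ = ∫ u, hEps ε u * φ u := by
    have := VectorFourier.integral_fourierIntegral_smul_eq_flip (L := innerₗ ℝ) (e := Real.fourierChar)
      (μ := MeasureTheory.volume) (ν := MeasureTheory.volume)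
      Real.continuous_fourierChar continuous_inner (hEps_integrable hε) ψ.integrable
    rw [flip_innerₗ] at this
    simp only [smul_eq_mul] at this
    have h2 : ∀ u, φ u = 𝓕 (ψ : ℝ → ℂ) u := by
      intro u; rw [← SchwartzMap.fourier_coe, hφ]
    simp_rw [h2]
    exact this
  rw [← hsw]
  have hψ2 : ∫ ξ, ‖ψ ξ‖ ^ 2 = ∫ u, ‖φ u‖ ^ 2 := by
    rw [← SchwartzMap.integral_norm_sq_fourier, hφ]
  have hψi : MeasureTheory.Integrable (fun ξ => ‖ψ ξ‖ ^ 2) := by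
    have := ψ.memLp 2 MeasureTheory.volume
    exact this.integrable_norm_pow (by norm_num)
  have hle : ‖∫ ξ, 𝓕 (hEps ε) ξ * ψ ξ‖ ≤ ∫ ξ, (l * (C ^ 2 * (1 + ‖ξ‖) ^ (-(162:ℝ)/100)) + ‖ψ ξ‖ ^ 2 / l) := by
    refine MeasureTheory.norm_integral_le_of_norm_le ((hDi.const_mul l).add (hψi.div_const l)) ?_
    filter_upwards with ξ
    rw [norm_mul]
    set A := ‖𝓕 (hEps ε) ξ‖
    set B := ‖ψ ξ‖
    have h1 : A * B ≤ l * A ^ 2 + B ^ 2 / l := by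
      have h3 : l * A ^ 2 + B ^ 2 / l - A * B = ((l * A - B / 2) ^ 2 + 3 / 4 * B ^ 2) / l := by field_simp; ring
      have h4 : 0 ≤ ((l * A - B / 2) ^ 2 + 3 / 4 * B ^ 2) / l := by positivity
      linarith
    refine h1.trans ?_
    have := hF ξ
    gcongr
  refine hle.trans ?_
  rw [MeasureTheory.integral_add (hDi.const_mul l) (hψi.div_const l), MeasureTheory.integral_const_mul,
    MeasureTheory.integral_div, hψ2, ← hK]
  have : l * K ≤ l * (K + 1) := by gcongr; linarith
  linarith
end

section
open scoped FourierTransform SchwartzMap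

lemma sum_inv_Ioc_le {M N : ℕ} (h : M + 1 ≤ N) :
    ∑ n ∈ Finset.Ioc M N, (n:ℝ)⁻¹ ≤ ((M:ℝ) + 1)⁻¹ + (Real.log N - Real.log (M + 1)) := by
  induction N, h using Nat.le_induction with
  | base => simp
  | succ N hN ih =>
    rw [← Finset.insert_Ioc_right_eq_Ioc_add_one (by omega), Finset.sum_insert (by simp)]
    have hN0 : (0:ℝ) < N := by exact_mod_cast (by omega : 0 < N)
    have h1 := Real.one_sub_inv_le_log_of_pos (x := ((N:ℝ)+1)/N) (by positivity)
    rw [Real.log_div (by positivity) (by positivity)] at h1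
    have h2 : 1 - (((N:ℝ)+1)/N)⁻¹ = ((N:ℝ)+1)⁻¹ := by field_simp; ring
    push_cast
    linarith

lemma gmu_slow {u v : ℝ} (hu : 0 ≤ u) (huv : u ≤ v) :
    |gmu (Real.exp v) - gmu (Real.exp u)| ≤ (v - u) + Real.exp (-u) := by
  unfold gmu
  set M := ⌊Real.exp u⌋₊ with hM
  set N := ⌊Real.exp v⌋₊ with hN
  have hMN : M ≤ N := Nat.floor_mono (Real.exp_le_exp.mpr huv)
  have e : Finset.Icc 1 N = Finset.Icc 1 M ∪ Finset.Ioc M N := by ext; simp; omega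
  have hd : Disjoint (Finset.Icc 1 M) (Finset.Ioc M N) := by
    rw [Finset.disjoint_left]; intro a; simp; omega
  rw [e, Finset.sum_union hd, add_sub_cancel_left]
  have hpos := Real.exp_pos (-u)
  rcases hMN.eq_or_lt with h | h
  · rw [h]; simp; linarith
  refine (Finset.abs_sum_le_sum_abs _ _).trans ?_
  have h1 : ∀ n ∈ Finset.Ioc M N, |(moebius n : ℝ) / n| ≤ (n:ℝ)⁻¹ := by
    intro n _
    rw [abs_div, Nat.abs_cast, div_eq_mul_inv]
    exact mul_le_of_le_one_left (by positivity) (moebius_abs_le_one n)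
  refine (Finset.sum_le_sum h1).trans ((sum_inv_Ioc_le h).trans ?_)
  have h2 : Real.exp u < M + 1 := Nat.lt_floor_add_one _
  have h3 : (N:ℝ) ≤ Real.exp v := Nat.floor_le (Real.exp_pos v).le
  have h4 : ((M:ℝ)+1)⁻¹ ≤ Real.exp (-u) := by
    rw [Real.exp_neg]; gcongr
  have h5 : Real.log N ≤ v := by
    rw [← Real.log_exp v]
    exact Real.log_le_log (by exact_mod_cast (by omega : 0 < N)) h3
  have h6 : u ≤ Real.log (M+1) := by
    rw [← Real.log_exp u]
    exact Real.log_le_log (Real.exp_pos _) h2.le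
  linarith

lemma gmu_exp_large : ∃ D : ℝ, 0 < D ∧ ∀ u : ℝ, 16 ≤ u → |gmu (Real.exp u)| ≤ D / u ^ 2 := by
  obtain ⟨K, hK, hs⟩ := smoothing
  set D := 16 * Real.exp 2 * (K + 1/4) with hD
  have hD0 : 0 < D := by positivity
  refine ⟨(1 + D)^2, by positivity, ?_⟩
  intro u hu
  have hu0 : 0 < u := by linarith
  set η := |gmu (Real.exp u)| with hη
  have hη1 : η ≤ 1 := gmu_abs_le _
  by_cases hsm : η ≤ 1 / u ^ 2
  · refine hsm.trans ?_
    gcongr; nlinarith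
  push Not at hsm
  have hη0 : 0 < η := lt_trans (by positivity) hsm
  have hexp : Real.exp (-u) ≤ η / 8 := by
    have h1 := Real.pow_div_factorial_le_exp u hu0.le 4
    have h2 : 8 * u ^ 2 ≤ Real.exp u := by
      refine le_trans ?_ h1
      rw [show ((Nat.factorial 4 : ℕ) : ℝ) = 24 by norm_num [Nat.factorial]]
      have h3 : 256 ≤ u ^ 2 := by nlinarith
      have h4 : u ^ 4 = u ^ 2 * u ^ 2 := by ring
      rw [h4]
      nlinarith
    rw [Real.exp_neg]
    calc (Real.exp u)⁻¹ ≤ (8 * u ^ 2)⁻¹ := by gcongr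
      _ = (1 / u ^ 2) / 8 := by field_simp
      _ ≤ η / 8 := by gcongr
  obtain ⟨σ, hσ1, hσ⟩ : ∃ σ : ℝ, |σ| = 1 ∧ σ * gmu (Real.exp u) = η := by
    rcases le_total 0 (gmu (Real.exp u)) with h | h
    · exact ⟨1, by simp, by rw [hη, abs_of_nonneg h]; ring⟩
    · exact ⟨-1, by simp, by rw [hη, abs_of_nonpos h]; ring⟩
  have hG : ∀ v, u ≤ v → v ≤ u + η / 4 → η / 2 ≤ σ * gmu (Real.exp v) := by
    intro v hv hv2
    have h1 := gmu_slow hu0.le hv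
    have h2 : |σ * (gmu (Real.exp v) - gmu (Real.exp u))| ≤ (v - u) + Real.exp (-u) := by
      rw [abs_mul, hσ1, one_mul]; exact h1
    have h3 := (abs_le.mp h2).1
    rw [mul_sub, hσ] at h3
    linarith
  let b : ContDiffBump (-(u + η / 8)) := ⟨η/16, η/8, by positivity, by linarith⟩
  have hbc : HasCompactSupport (fun t => ((b t : ℝ) : ℂ)) :=
    b.hasCompactSupport.comp_left (g := fun r : ℝ => (r:ℂ)) (by simp)
  set φ : 𝓢(ℝ, ℂ) := hbc.toSchwartzMap (by exact Complex.ofRealCLM.contDiff.comp b.contDiff) with hφ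
  have hφv : ∀ t, φ t = ((b t : ℝ) : ℂ) := fun t => rfl
  have hsm := hs (1/u) (by positivity) (by rw [div_le_one hu0]; linarith) φ (√η) (by positivity)
  have hbin : ∀ t, t ∈ Metric.closedBall (-(u + η / 8)) (η/16) → b t = 1 := fun t ht =>
    b.one_of_mem_closedBall ht
  have hbout : ∀ t, t ∉ Metric.ball (-(u + η / 8)) (η/8) → b t = 0 := fun t ht =>
    b.zero_of_le_dist (by simpa [Metric.mem_ball] using ht)
  set F : ℝ → ℝ := fun t => Real.exp (1/u * t) * ((-t) * ((-t) * ((-t) * gmu (Real.exp (-t))))) * b t with hF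
  have hFe : ∀ t, hEps (1/u) t * φ t = ((F t : ℝ) : ℂ) := by
    intro t
    rw [hφv, hF, hEps, lg3]
    simp only [Real.log_exp, Complex.real_smul]
    push_cast
    ring
  have hFi : MeasureTheory.Integrable F := by
    have h1 : MeasureTheory.Integrable (fun t => hEps (1/u) t * φ t) := by
      refine (hEps_integrable (ε := 1/u) (by positivity)).mul_bdd (c := 1) φ.continuous.aestronglyMeasurable ?_
      filter_upwards with t
      rw [hφv, Complex.norm_real, Real.norm_of_nonneg b.nonneg]
      exact b.le_one
    simp_rw [hFe] at h1
    simpa using h1.re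
  have h_int : ∫ t, hEps (1/u) t * φ t = ((∫ t, F t : ℝ) : ℂ) := by
    simp_rw [hFe]
    exact integral_ofReal
  have hlow : ∀ t, t ∈ Metric.ball (-(u + η / 8)) (η/8) →
      Real.exp (-2) * (u ^ 3 * (η / 2)) * b t ≤ σ * F t := by
    intro t ht
    rw [Real.ball_eq_Ioo] at ht
    obtain ⟨ht1, ht2⟩ := ht
    have h1 := hG (-t) (by linarith) (by linarith)
    have h2 : Real.exp (-2) ≤ Real.exp (1/u * t) := by
      rw [Real.exp_le_exp, div_mul_eq_mul_div, le_div_iff₀ hu0]; linarith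
    have h3 : u ^ 3 ≤ (-t) ^ 3 := by gcongr; linarith
    have : σ * F t = Real.exp (1/u * t) * ((-t) ^ 3 * (σ * gmu (Real.exp (-t)))) * b t := by
      simp only [hF]; ring
    rw [this]
    have := b.nonneg (x := t)
    have : 0 ≤ (-t)^3 := le_trans (by positivity) h3
    gcongr
  have hlow2 : Real.exp (-2) * (u ^ 3 * (η / 2)) * (η / 8) ≤ ∫ t, σ * F t := by
    have h1 : ∫ t in Metric.closedBall (-(u + η / 8)) (η/16), Real.exp (-2) * (u ^ 3 * (η / 2)) =
        Real.exp (-2) * (u ^ 3 * (η / 2)) * (η / 8) := by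
      rw [MeasureTheory.setIntegral_const, MeasureTheory.measureReal_def, Real.volume_closedBall, ENNReal.toReal_ofReal (by positivity)]
      simp only [smul_eq_mul]; ring
    rw [← h1, ← MeasureTheory.integral_indicator Metric.isClosed_closedBall.measurableSet]
    refine MeasureTheory.integral_mono ?_ (hFi.const_mul σ) ?_
    · rw [MeasureTheory.integrable_indicator_iff Metric.isClosed_closedBall.measurableSet]
      exact MeasureTheory.integrableOn_const (by rw [Real.volume_closedBall]; exact ENNReal.ofReal_ne_top)
    intro t
    simp only [Set.indicator]
    split_ifs with h
    · have := hlow t (Metric.closedBall_subset_ball (by linarith) h)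
      rw [hbin t h, mul_one] at this
      exact this
    · by_cases h2 : t ∈ Metric.ball (-(u + η / 8)) (η/8)
      · refine le_trans ?_ (hlow t h2)
        have := b.nonneg (x := t)
        positivity
      · simp only [hF]; rw [hbout t h2]; simp
  have hup : ∫ t, ‖φ t‖ ^ 2 ≤ η / 4 := by
    have h1 : ∫ t in Metric.ball (-(u + η / 8)) (η/8), (1:ℝ) = η / 4 := by
      rw [MeasureTheory.setIntegral_const, MeasureTheory.measureReal_def, Real.volume_ball, ENNReal.toReal_ofReal (by positivity)]
      simp only [smul_eq_mul]; ring
    rw [← h1, ← MeasureTheory.integral_indicator Metric.isOpen_ball.measurableSet]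
    refine MeasureTheory.integral_mono_of_nonneg (Filter.Eventually.of_forall fun t => by positivity) ?_ (Filter.Eventually.of_forall ?_)
    · rw [MeasureTheory.integrable_indicator_iff Metric.isOpen_ball.measurableSet]
      exact MeasureTheory.integrableOn_const (by rw [Real.volume_ball]; exact ENNReal.ofReal_ne_top)
    intro t
    simp only [Set.indicator]
    rw [hφv, Complex.norm_real, Real.norm_of_nonneg b.nonneg]
    split_ifs with h
    · exact pow_le_one₀ b.nonneg b.le_one
    · rw [hbout t h]; simp
  have hfin : Real.exp (-2) * (u ^ 3 * (η / 2)) * (η / 8) ≤ √η * K + (η / 4) / √η := by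
    rw [h_int, Complex.norm_real] at hsm
    refine le_trans ?_ (hsm.trans (by gcongr))
    refine hlow2.trans ?_
    rw [MeasureTheory.integral_const_mul]
    refine (le_abs_self _).trans ?_
    rw [abs_mul, hσ1, one_mul, Real.norm_eq_abs]
  set s := √η with hss
  have hs0 : 0 < s := Real.sqrt_pos.mpr hη0
  have hsq : η = s ^ 2 := (Real.sq_sqrt hη0.le).symm
  have hcub : (s * u) ^ 3 ≤ D := by
    rw [hsq] at hfin
    have e1 : s * K + s ^ 2 / 4 / s = s * (K + 1/4) := by field_simp
    rw [e1] at hfin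
    have e2 : Real.exp (-2) * (u ^ 3 * (s ^ 2 / 2)) * (s ^ 2 / 8) = s * ((s * u) ^ 3 / (16 * Real.exp 2)) := by
      rw [Real.exp_neg]; field_simp; ring
    rw [e2] at hfin
    have := le_of_mul_le_mul_left hfin hs0
    rw [div_le_iff₀ (by positivity)] at this
    rw [hD]; linarith
  have hsu : s * u ≤ 1 + D := by
    by_contra h
    push Not at h
    have : (1 + D) ^ 3 < (s * u) ^ 3 := by gcongr
    nlinarith [sq_nonneg D, pow_pos hD0 3]
  rw [hsq, le_div_iff₀ (by positivity), ← mul_pow]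
  gcongr

/-- Theorem 1 -/
lemma gmu_bound : ∃ D : ℝ, 0 < D ∧ ∀ x : ℝ, 2 ≤ x → |gmu x| ≤ D / (Real.log x) ^ 2 := by
  obtain ⟨D, hD, h⟩ := gmu_exp_large
  refine ⟨D + 256, by positivity, ?_⟩
  intro x hx
  have hl : 0 < Real.log x := Real.log_pos (by linarith)
  by_cases h16 : 16 ≤ Real.log x
  · have := h _ h16
    rw [Real.exp_log (by linarith)] at this
    exact this.trans (by gcongr; linarith)
  · push Not at h16
    refine (gmu_abs_le x).trans ?_
    rw [le_div_iff₀ (by positivity)]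
    nlinarith
end


lemma psi_le_six {x : ℝ} (hx : 0 ≤ x) : Chebyshev.psi x ≤ 6 * x := by
  refine (Chebyshev.psi_le_const_mul_self hx).trans ?_
  have : Real.log 4 ≤ 2 := by
    rw [show (4:ℝ) = 2 ^ 2 by norm_num, Real.log_pow]
    have := Real.log_two_lt_d9; push_cast; linarith
  gcongr; linarith

lemma sum_vonMangoldt_div_le (N : ℕ) (hN : 1 ≤ N) :
    ∑ n ∈ Finset.Ioc 0 N, (vonMangoldt n) / n ≤ Real.log N + 6 := by
  have hN0 : (0:ℝ) < N := by exact_mod_cast hN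
  have h := ArithmeticFunction.sum_Ioc_mul_zeta_eq_sum (R := ℝ) vonMangoldt N
  rw [vonMangoldt_mul_zeta] at h
  have h1 : ∑ n ∈ Finset.Ioc 0 N, ArithmeticFunction.log n ≤ N * Real.log N := by
    have : ∀ n ∈ Finset.Ioc 0 N, ArithmeticFunction.log n ≤ Real.log N := by
      intro n hn
      simp at hn
      rw [ArithmeticFunction.log_apply]
      exact Real.log_le_log (by exact_mod_cast hn.1) (by exact_mod_cast hn.2)
    refine (Finset.sum_le_sum this).trans ?_
    simp
  have h2 : Chebyshev.psi N ≤ 6 * N := psi_le_six hN0.le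
  rw [Chebyshev.psi, Nat.floor_natCast] at h2
  have h3 : N * ∑ n ∈ Finset.Ioc 0 N, (vonMangoldt n) / n ≤
      ∑ n ∈ Finset.Ioc 0 N, vonMangoldt n * ((N / n : ℕ):ℝ) + ∑ n ∈ Finset.Ioc 0 N, vonMangoldt n := by
    rw [Finset.mul_sum, ← Finset.sum_add_distrib]
    refine Finset.sum_le_sum fun n hn => ?_
    have h4 : (N:ℝ)/n ≤ ((N / n : ℕ):ℝ) + 1 := by
      rw [← Nat.floor_div_eq_div (K := ℝ)]
      exact (Nat.lt_floor_add_one ((N:ℝ)/n)).le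
    have h5 := @vonMangoldt_nonneg n
    calc (N:ℝ) * (vonMangoldt n / n) = vonMangoldt n * (N / n) := by ring
      _ ≤ vonMangoldt n * (((N / n : ℕ):ℝ) + 1) := by gcongr
      _ = _ := by ring
  have h6 : (N:ℝ) * ∑ n ∈ Finset.Ioc 0 N, (vonMangoldt n) / n ≤ N * (Real.log N + 6) := by
    linarith
  exact le_of_mul_le_mul_left h6 hN0

/-- sum of reciprocals of primes -/
noncomputable def PS (N : ℕ) : ℝ := ∑ p ∈ (Finset.Ioc 0 N).filter Nat.Prime, (p:ℝ)⁻¹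

lemma PS_nonneg (N : ℕ) : 0 ≤ PS N := Finset.sum_nonneg fun _ _ => by positivity

lemma PS_mono {M N : ℕ} (h : M ≤ N) : PS M ≤ PS N := by
  refine Finset.sum_le_sum_of_subset_of_nonneg ?_ fun _ _ _ => by positivity
  exact Finset.filter_subset_filter _ (Finset.Ioc_subset_Ioc_right h)

lemma PS_sq (w : ℕ) (hw : 2 ≤ w) : PS (w ^ 2) ≤ PS w + 14 := by
  have hl : 0 < Real.log w := Real.log_pos (by exact_mod_cast (by omega : 1 < w))
  have hl2 : (1:ℝ)/2 ≤ Real.log w := by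
    have h1 := Real.log_two_gt_d9
    have h2 : Real.log 2 ≤ Real.log w := Real.log_le_log (by norm_num) (by exact_mod_cast hw)
    linarith
  have hww : w ≤ w ^ 2 := by nlinarith
  have e : (Finset.Ioc 0 (w^2)).filter Nat.Prime = (Finset.Ioc 0 w).filter Nat.Prime ∪
      (Finset.Ioc w (w^2)).filter Nat.Prime := by
    ext p; simp only [mem_filter, mem_Ioc, mem_union]
    constructor
    · rintro ⟨⟨h1, h2⟩, h3⟩
      by_cases h : p ≤ w
      · exact Or.inl ⟨⟨h1, h⟩, h3⟩
      · exact Or.inr ⟨⟨by omega, h2⟩, h3⟩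
    · rintro (⟨⟨h1, h2⟩, h3⟩ | ⟨⟨h1, h2⟩, h3⟩)
      · exact ⟨⟨h1, by omega⟩, h3⟩
      · exact ⟨⟨by omega, h2⟩, h3⟩
  have hd : Disjoint ((Finset.Ioc 0 w).filter Nat.Prime) ((Finset.Ioc w (w^2)).filter Nat.Prime) := by
    rw [Finset.disjoint_left]; intro a; simp; omega
  unfold PS
  rw [e, Finset.sum_union hd]
  have h1 : ∑ p ∈ (Finset.Ioc w (w^2)).filter Nat.Prime, (p:ℝ)⁻¹ ≤
      (∑ n ∈ Finset.Ioc 0 (w^2), (vonMangoldt n) / n) / Real.log w := by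
    rw [Finset.sum_div]
    refine (Finset.sum_le_sum (g := fun n => vonMangoldt n / n / Real.log w) ?_).trans
      (Finset.sum_le_sum_of_subset_of_nonneg ?_ ?_)
    · intro p hp
      simp only [mem_filter, mem_Ioc] at hp
      rw [vonMangoldt_apply_prime hp.2]
      have hp0 : (0:ℝ) < p := by exact_mod_cast hp.2.pos
      have : Real.log w ≤ Real.log p := Real.log_le_log (by exact_mod_cast (by omega : 0 < w)) (by exact_mod_cast hp.1.1.le)
      rw [le_div_iff₀ hl, inv_mul_eq_div]
      gcongr
    · intro a; simp; omega
    · intro n _ _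
      have h5 := @vonMangoldt_nonneg n
      positivity
  have h2 := sum_vonMangoldt_div_le (w^2) (by nlinarith)
  have h3 : (∑ n ∈ Finset.Ioc 0 (w^2), (vonMangoldt n) / n) / Real.log w ≤ 14 := by
    rw [div_le_iff₀ hl]
    refine h2.trans ?_
    push_cast
    rw [Real.log_pow]; push_cast; linarith
  linarith

lemma PS_pow (k : ℕ) : PS (2 ^ 2 ^ k) ≤ 1 + 14 * k := by
  induction k with
  | zero =>
    have : (Finset.Ioc 0 2).filter Nat.Prime = {2} := by decide
    simp [PS, this]; norm_num
  | succ k ih =>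
    have := PS_sq (2 ^ 2 ^ k) (by
      calc 2 = 2 ^ 1 := by norm_num
        _ ≤ 2 ^ 2 ^ k := Nat.pow_le_pow_right (by norm_num) Nat.one_le_two_pow)
    rw [← pow_mul, ← pow_succ] at this
    push_cast
    linarith

lemma loglog_ge_one {x : ℝ} (hx : 16 ≤ x) : 1 ≤ Real.log (Real.log x) := by
  have h1 : Real.exp 1 ≤ Real.log x := by
    have h2 : Real.log 16 ≤ Real.log x := Real.log_le_log (by norm_num) hx
    have h3 : Real.log 16 = 4 * Real.log 2 := by
      rw [show (16:ℝ) = 2 ^ 4 by norm_num, Real.log_pow]; norm_num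
    have h4 := Real.log_two_gt_d9
    have h5 := Real.exp_one_lt_d9
    linarith
  rw [Real.le_log_iff_exp_le (by linarith [Real.exp_pos 1])]
  exact h1

lemma PS_le {x : ℝ} (hx : 16 ≤ x) : PS ⌊x⌋₊ ≤ 64 * Real.log (Real.log x) := by
  set ℓ := Real.log (Real.log x) with hℓ
  have hℓ1 : 1 ≤ ℓ := loglog_ge_one hx
  have hL : 0 < Real.log x := Real.log_pos (by linarith)
  set k := ⌈2 * ℓ + 1⌉₊ with hk
  have hk1 : 2 * ℓ + 1 ≤ k := Nat.le_ceil _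
  have hk2 : (k:ℝ) < 2 * ℓ + 1 + 1 := Nat.ceil_lt_add_one (by linarith)
  have h2 := Real.log_two_gt_d9
  have hxk : x ≤ 2 ^ 2 ^ k := by
    have e1 : Real.log x ≤ 2 ^ k * Real.log 2 := by
      have : Real.log x = Real.exp ℓ := by rw [hℓ, Real.exp_log hL]
      rw [this]
      have h3 : (2:ℝ) ^ k = Real.exp (k * Real.log 2) := by
        rw [mul_comm, Real.exp_mul, Real.exp_log (by norm_num), Real.rpow_natCast]
      have h4 : Real.exp (ℓ + Real.log 2) ≤ (2:ℝ) ^ k := by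
        rw [h3, Real.exp_le_exp]; nlinarith
      rw [Real.exp_add, Real.exp_log (x := 2) (by norm_num)] at h4
      have := Real.exp_pos ℓ
      nlinarith
    rw [← Real.log_le_log_iff (by linarith) (by positivity), Real.log_pow]
    push_cast; exact e1
  have h3 : ⌊x⌋₊ ≤ 2 ^ 2 ^ k := by
    have : ⌊x⌋₊ ≤ ⌊((2 ^ 2 ^ k : ℕ):ℝ)⌋₊ := Nat.floor_mono (by push_cast; exact hxk)
    rwa [Nat.floor_natCast] at this
  refine (PS_mono h3).trans ((PS_pow k).trans ?_)
  nlinarith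

open Classical in
/-- integers up to `N` all of whose prime factors exceed `y` -/
noncomputable def rough (N y : ℕ) : Finset ℕ := (Finset.Icc 1 N).filter fun m => ∀ p, p.Prime → p ∣ m → y < p

lemma rough_coprime {r d y : ℕ} (hr : ∀ p, p.Prime → p ∣ r → y < p) (hd : 0 < d) (hdy : d ≤ y) :
    Nat.Coprime d r := by
  rw [Nat.coprime_iff_gcd_eq_one]
  by_contra h
  obtain ⟨p, hp, hpd⟩ := Nat.exists_prime_and_dvd h
  have h1 := hr p hp (hpd.trans (Nat.gcd_dvd_right _ _))
  have h2 := Nat.le_of_dvd hd (hpd.trans (Nat.gcd_dvd_left _ _))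
  omega

lemma rough_inv_sum (N y : ℕ) :
    (∑ r ∈ rough N y, (r:ℝ)⁻¹) * ∑ d ∈ Finset.Icc 1 y, (d:ℝ)⁻¹ ≤ ∑ n ∈ Finset.Icc 1 (N * y), (n:ℝ)⁻¹ := by
  rw [Finset.sum_mul_sum, ← Finset.sum_product']
  have hinj : Set.InjOn (fun a : ℕ × ℕ => a.1 * a.2) (rough N y ×ˢ Finset.Icc 1 y : Finset (ℕ × ℕ)) := by
    rintro ⟨r, d⟩ h1 ⟨r', d'⟩ h2 h
    simp only [coe_product, Set.mem_prod, mem_coe, rough, mem_filter, mem_Icc] at h1 h2 h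
    have c1 := rough_coprime h2.1.2 h1.2.1 h1.2.2
    have c2 := rough_coprime h1.1.2 h2.2.1 h2.2.2
    have d1 : d ∣ d' := c1.dvd_of_dvd_mul_left (h ▸ Dvd.intro_left r rfl)
    have d2 : d' ∣ d := c2.dvd_of_dvd_mul_left (h ▸ Dvd.intro_left r' rfl)
    have hd := Nat.dvd_antisymm d1 d2
    subst hd
    have := Nat.eq_of_mul_eq_mul_right h1.2.1 h
    simp [this]
  calc _ = ∑ n ∈ (rough N y ×ˢ Finset.Icc 1 y).image (fun a : ℕ × ℕ => a.1 * a.2), (n:ℝ)⁻¹ := by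
        rw [Finset.sum_image hinj]
        refine Finset.sum_congr rfl fun a _ => ?_
        push_cast; rw [mul_inv]
    _ ≤ _ := by
        refine Finset.sum_le_sum_of_subset_of_nonneg ?_ fun _ _ _ => by positivity
        intro n hn
        simp only [mem_image, mem_product, rough, mem_filter, mem_Icc] at hn ⊢
        obtain ⟨⟨r, d⟩, ⟨h1, h2⟩, rfl⟩ := hn
        exact ⟨Nat.mul_pos h1.1.1 h2.1, Nat.mul_le_mul h1.1.2 h2.2⟩

lemma rough_log_sum (N y : ℕ) :
    ∑ m ∈ rough N y, Real.log m ≤ 6 * N * ∑ r ∈ rough N y, (r:ℝ)⁻¹ := by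
  have h1 : ∀ m ∈ rough N y, Real.log m = ∑ r ∈ rough N y, if r ∣ m then vonMangoldt (m / r) else 0 := by
    intro m hm
    rw [← vonMangoldt_sum, ← Finset.sum_filter, ← Nat.sum_div_divisors]
    refine Finset.sum_congr ?_ fun _ _ => rfl
    ext r
    simp only [rough, mem_filter, mem_Icc, Nat.mem_divisors] at hm ⊢
    constructor
    · rintro ⟨h, h0⟩
      exact ⟨⟨⟨Nat.pos_of_dvd_of_pos h hm.1.1, (Nat.le_of_dvd hm.1.1 h).trans hm.1.2⟩,
        fun p hp hpr => hm.2 p hp (hpr.trans h)⟩, h⟩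
    · rintro ⟨_, h⟩
      exact ⟨h, by omega⟩
  rw [Finset.sum_congr rfl h1, Finset.sum_comm, Finset.mul_sum]
  refine Finset.sum_le_sum fun r hr => ?_
  have hr1 : 1 ≤ r := by simp [rough] at hr; exact hr.1.1
  have h2 : Chebyshev.psi ((N:ℝ)/r) ≤ 6 * ((N:ℝ)/r) := psi_le_six (by positivity)
  rw [Chebyshev.psi, Nat.floor_div_eq_div] at h2
  refine le_trans ?_ (h2.trans (by rw [div_eq_mul_inv, mul_assoc]))
  rw [← Finset.sum_filter]
  rw [← Finset.sum_image (g := fun m => m / r) (f := fun d => vonMangoldt d)]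
  · refine Finset.sum_le_sum_of_subset_of_nonneg ?_ fun _ _ _ => vonMangoldt_nonneg
    intro d hd
    simp only [rough, mem_image, mem_filter, mem_Icc, mem_Ioc] at hd ⊢
    obtain ⟨m, ⟨⟨⟨h3, h4⟩, _⟩, h5⟩, rfl⟩ := hd
    exact ⟨Nat.div_pos (Nat.le_of_dvd h3 h5) hr1, Nat.div_le_div_right h4⟩
  · intro a ha b hb h
    simp only [coe_filter, Set.mem_ofPred_eq] at ha hb
    exact (Nat.div_left_inj ha.2 hb.2).mp h

lemma rough_card (N y : ℕ) (hy : 2 ≤ y) (hN : y ≤ N) :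
    ((rough N y).card : ℝ) ≤ 60 * N / Real.log y := by
  have hN0 : (0:ℝ) < N := by exact_mod_cast (by omega : 0 < N)
  have hy0 : (0:ℝ) < y := by exact_mod_cast (by omega : 0 < y)
  have hl2 := Real.log_two_gt_d9
  have hly : Real.log 2 ≤ Real.log y := Real.log_le_log (by norm_num) (by exact_mod_cast hy)
  have hlN : Real.log y ≤ Real.log N := Real.log_le_log hy0 (by exact_mod_cast hN)
  have hly0 : 0 < Real.log y := by linarith
  have hlN0 : 0 < Real.log N := by linarith
  have hH : Real.log y ≤ ∑ d ∈ Finset.Icc 1 y, (d:ℝ)⁻¹ := by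
    have := log_add_one_le_harmonic y
    rw [harmonic_eq_sum_Icc] at this
    push_cast at this
    refine le_trans ?_ this
    exact Real.log_le_log hy0 (by linarith)
  set Rs := ∑ r ∈ rough N y, (r:ℝ)⁻¹ with hRs
  have hRs0 : 0 ≤ Rs := Finset.sum_nonneg fun _ _ => by positivity
  have h1 : Rs * Real.log y ≤ 1 + 2 * Real.log N := by
    have h2 := (rough_inv_sum N y).trans (sum_inv_Icc_le (N * y))
    push_cast at h2
    rw [Real.log_mul hN0.ne' hy0.ne'] at h2
    have : Rs * Real.log y ≤ Rs * ∑ d ∈ Finset.Icc 1 y, (d:ℝ)⁻¹ := by gcongr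
    linarith
  have h2 := rough_log_sum N y
  -- split
  have hsplit : ((rough N y).card : ℝ) * (Real.log N / 2) ≤ √N * (Real.log N / 2) + ∑ m ∈ rough N y, Real.log m := by
    have hb : ∀ m ∈ rough N y, Real.log N / 2 ≤ (if m ≤ ⌊√(N:ℝ)⌋₊ then Real.log N / 2 else 0) + Real.log m := by
      intro m hm
      have hm1 : 1 ≤ m := by simp [rough] at hm; exact hm.1.1
      have : 0 ≤ Real.log m := Real.log_natCast_nonneg m
      split_ifs with h
      · linarith
      · rw [zero_add, ← Real.log_sqrt hN0.le]
        refine Real.log_le_log (by positivity) ?_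
        push Not at h
        exact ((Nat.floor_lt (by positivity)).mp h).le
    have := Finset.sum_le_sum hb
    rw [Finset.sum_const, nsmul_eq_mul, Finset.sum_add_distrib, ← Finset.sum_filter, Finset.sum_const, nsmul_eq_mul] at this
    refine this.trans ?_
    gcongr
    have hc : ((rough N y).filter (fun m => m ≤ ⌊√(N:ℝ)⌋₊)).card ≤ (Finset.Icc 1 ⌊√(N:ℝ)⌋₊).card := by
      refine Finset.card_le_card ?_
      intro m; simp [rough]; intro h _ _ h2; exact ⟨h, h2⟩
    rw [Nat.card_Icc, Nat.add_sub_cancel] at hc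
    exact (Nat.cast_le.mpr hc).trans (Nat.floor_le (by positivity))
  have hs : Real.log N * √N ≤ 2 * N := by
    have h3 := Real.log_le_sub_one_of_pos (x := √(N:ℝ)) (by positivity)
    rw [Real.log_sqrt hN0.le] at h3
    have h4 : (N:ℝ) = √N * √N := (Real.mul_self_sqrt hN0.le).symm
    have h5 : 0 < √(N:ℝ) := by positivity
    nlinarith
  have h7 : ((rough N y).card : ℝ) * Real.log y * (Real.log N / 2) ≤ (2 * N) * (Real.log N / 2) + 6 * N * (4 * Real.log N) := by
    calc ((rough N y).card : ℝ) * Real.log y * (Real.log N / 2) = (((rough N y).card : ℝ) * (Real.log N / 2)) * Real.log y := by ring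
      _ ≤ (√N * (Real.log N / 2) + 6 * N * Rs) * Real.log y := by gcongr; linarith
      _ = (√N * Real.log y) * (Real.log N / 2) + 6 * N * (Rs * Real.log y) := by ring
      _ ≤ _ := by
        have g1 : √N * Real.log y ≤ 2 * N := by nlinarith [Real.sqrt_nonneg (N:ℝ)]
        have g2 : Rs * Real.log y ≤ 4 * Real.log N := by linarith
        exact add_le_add (mul_le_mul_of_nonneg_right g1 (by linarith)) (mul_le_mul_of_nonneg_left g2 (by linarith))
  rw [le_div_iff₀ hly0]
  have h8 : ((rough N y).card : ℝ) * Real.log y * (Real.log N / 2) ≤ (60 * N) * (Real.log N / 2) := by nlinarith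
  exact le_of_mul_le_mul_right h8 (by linarith)


/-- indicator of integers with all prime factors in `T` -/
noncomputable def smF (T : Finset ℕ) : ArithmeticFunction ℝ :=
  ⟨fun n => if n ≠ 0 ∧ n.primeFactors ⊆ T then 1 else 0, by simp⟩

/-- Moebius function restricted to integers without prime factors in `T` -/
noncomputable def cpF (T : Finset ℕ) : ArithmeticFunction ℝ :=
  ⟨fun n => if n ≠ 0 ∧ Disjoint n.primeFactors T then (moebius n : ℝ) else 0, by simp⟩

lemma smF_apply (T : Finset ℕ) (n : ℕ) : smF T n = if n ≠ 0 ∧ n.primeFactors ⊆ T then 1 else 0 := rfl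

lemma cpF_apply (T : Finset ℕ) (n : ℕ) :
    cpF T n = if n ≠ 0 ∧ Disjoint n.primeFactors T then (moebius n : ℝ) else 0 := rfl

lemma smF_mult (T : Finset ℕ) : (smF T).IsMultiplicative := by
  refine ⟨by simp [smF_apply], ?_⟩
  intro m n h
  simp only [smF_apply, h.primeFactors_mul, Finset.union_subset_iff, mul_ne_zero_iff]
  by_cases h1 : m ≠ 0 <;> by_cases h2 : n ≠ 0 <;> by_cases h3 : m.primeFactors ⊆ T <;>
    by_cases h4 : n.primeFactors ⊆ T <;> simp [h1, h2, h3, h4]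

lemma cpF_mult (T : Finset ℕ) : (cpF T).IsMultiplicative := by
  refine ⟨by simp [cpF_apply], ?_⟩
  intro m n h
  simp only [cpF_apply, h.primeFactors_mul, Finset.disjoint_union_left, mul_ne_zero_iff,
    isMultiplicative_moebius.map_mul_of_coprime h]
  by_cases h1 : m ≠ 0 <;> by_cases h2 : n ≠ 0 <;> by_cases h3 : Disjoint m.primeFactors T <;>
    by_cases h4 : Disjoint n.primeFactors T <;> simp [h1, h2, h3, h4]

lemma cpF_mul_zeta (T : Finset ℕ) : cpF T * (zeta : ArithmeticFunction ℝ) = smF T := by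
  rw [((cpF_mult T).mul isMultiplicative_zeta.natCast).eq_iff_eq_on_prime_powers _ _ (smF_mult T)]
  intro p i hp
  rw [coe_mul_zeta_apply, Nat.sum_divisors_prime_pow hp]
  rcases i with _ | i
  · simp [cpF_apply, smF_apply]
  rw [Finset.sum_range_succ', Finset.sum_range_succ']
  have h0 : ∑ j ∈ Finset.range i, cpF T (p ^ (j + 1 + 1)) = 0 := by
    refine Finset.sum_eq_zero fun j _ => ?_
    rw [cpF_apply, moebius_apply_prime_pow hp (by omega)]
    simp
  rw [h0]
  simp only [cpF_apply, smF_apply, Nat.primeFactors_prime_pow (Nat.succ_ne_zero _) hp]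
  by_cases h : p ∈ T <;> simp [h, hp.ne_zero, moebius_apply_prime hp]

lemma smF_mul_moebius (T : Finset ℕ) : smF T * (moebius : ArithmeticFunction ℝ) = cpF T := by
  rw [← cpF_mul_zeta, mul_assoc, coe_zeta_mul_coe_moebius, mul_one]

/-- division by the identity -/
noncomputable def dvF (f : ArithmeticFunction ℝ) : ArithmeticFunction ℝ := ⟨fun n => f n / n, by simp⟩

lemma dvF_apply (f : ArithmeticFunction ℝ) (n : ℕ) : dvF f n = f n / n := rfl

lemma dvF_mul (f g : ArithmeticFunction ℝ) : dvF (f * g) = dvF f * dvF g := by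
  ext n
  rw [dvF_apply, mul_apply, mul_apply, Finset.sum_div]
  refine Finset.sum_congr rfl fun a ha => ?_
  rw [Nat.mem_divisorsAntidiagonal] at ha
  rw [dvF_apply, dvF_apply, div_mul_div_comm, ← ha.1]
  push_cast; rfl

/-- the basic sum -/
noncomputable def HF (T : Finset ℕ) (X : ℝ) : ℝ :=
  ∑ m ∈ Finset.Ioc 0 ⌊X⌋₊, cpF T m * Int.fract (X / m)

lemma HF_eq (T : Finset ℕ) {X : ℝ} (hX : 0 ≤ X) :
    HF T X = X * (∑ d ∈ Finset.Ioc 0 ⌊X⌋₊, smF T d / d * gmu (X / d)) -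
      ∑ d ∈ Finset.Ioc 0 ⌊X⌋₊, smF T d := by
  have h1 : ∀ m : ℕ, Int.fract (X / m) = X / m - ((⌊X⌋₊ / m : ℕ) : ℝ) := by
    intro m
    rw [Int.fract, ← Nat.floor_div_natCast, natCast_floor_eq_intCast_floor (by positivity)]
  have h2 := ArithmeticFunction.sum_Ioc_mul_zeta_eq_sum (R := ℝ) (cpF T) ⌊X⌋₊
  rw [cpF_mul_zeta] at h2
  have h3 := ArithmeticFunction.sum_Ioc_mul_eq_sum_sum (R := ℝ) (dvF (smF T)) (dvF (moebius : ArithmeticFunction ℝ)) ⌊X⌋₊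
  rw [← dvF_mul, smF_mul_moebius] at h3
  have h4 : ∀ d : ℕ, gmu (X / d) = ∑ m ∈ Finset.Ioc 0 (⌊X⌋₊ / d), dvF (moebius : ArithmeticFunction ℝ) m := by
    intro d
    rw [gmu, Nat.floor_div_natCast]
    refine Finset.sum_congr (by ext; simp; omega) fun m _ => ?_
    rw [dvF_apply]; rfl
  simp_rw [h4, ← dvF_apply]
  rw [h2, ← h3, HF, Finset.mul_sum, ← Finset.sum_sub_distrib]
  refine Finset.sum_congr rfl fun m _ => ?_
  rw [h1, dvF_apply]; ring

lemma smF_nonneg (T : Finset ℕ) (n : ℕ) : 0 ≤ smF T n := by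
  rw [smF_apply]; split_ifs <;> norm_num

lemma smF_le_one (T : Finset ℕ) (n : ℕ) : smF T n ≤ 1 := by
  rw [smF_apply]; split_ifs <;> norm_num

/-- tail of the reciprocal sum over smooth numbers -/
noncomputable def EF (T : Finset ℕ) (X : ℝ) : ℝ :=
  ∑ d ∈ (Finset.Ioc 0 ⌊X⌋₊).filter (fun d : ℕ => √X < d), smF T d / d

lemma sum_inv_floor_le {X : ℝ} (hX : 1 ≤ X) :
    ∑ d ∈ Finset.Ioc 0 ⌊X⌋₊, (d:ℝ)⁻¹ ≤ 1 + Real.log X := by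
  have h := sum_inv_Icc_le ⌊X⌋₊
  have e : Finset.Ioc 0 ⌊X⌋₊ = Finset.Icc 1 ⌊X⌋₊ := by ext; simp; omega
  rw [e]
  refine h.trans ?_
  gcongr
  · exact_mod_cast Nat.floor_pos.mpr hX
  · exact Nat.floor_le (by linarith)

lemma HF_bound : ∃ D : ℝ, 0 < D ∧ ∀ (T : Finset ℕ) (X : ℝ), 4 ≤ X →
    |HF T X| ≤ X * (D / Real.log X + 2 * EF T X + (√X)⁻¹) := by
  obtain ⟨D, hD, hg⟩ := gmu_bound
  refine ⟨8 * D, by positivity, ?_⟩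
  intro T X hX
  have hX0 : 0 < X := by linarith
  have hlX : 1 ≤ Real.log X := by
    have h4 := Real.log_two_gt_d9
    have h2 : Real.log 4 ≤ Real.log X := Real.log_le_log (by norm_num) hX
    have h3 : Real.log 4 = 2 * Real.log 2 := by
      rw [show (4:ℝ) = 2 ^ 2 by norm_num, Real.log_pow]; norm_num
    linarith
  have hsq : 2 ≤ √X := by
    rw [show (2:ℝ) = √4 by rw [show (4:ℝ) = 2^2 by norm_num]; simp]
    exact Real.sqrt_le_sqrt hX
  have hss : √X * √X = X := Real.mul_self_sqrt hX0.le
  set S := Finset.Ioc 0 ⌊X⌋₊ with hS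
  have hE0 : EF T X = ∑ d ∈ S, if √X < d then smF T d / d else 0 := by
    rw [EF, Finset.sum_filter]
  -- first part
  have b1 : ∑ d ∈ S, |smF T d / d * gmu (X / d)| ≤ 8 * D / Real.log X + EF T X := by
    have hb : ∀ d ∈ S, |smF T d / d * gmu (X / d)| ≤
        (d:ℝ)⁻¹ * (4 * D / (Real.log X)^2) + (if √X < d then smF T d / d else 0) := by
      intro d hd
      have hd0 : (0:ℝ) < d := by simp [hS] at hd; exact_mod_cast hd.1
      have hs0 := smF_nonneg T d
      have hs1 := smF_le_one T d
      rw [abs_mul, abs_of_nonneg (by positivity)]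
      split_ifs with h
      · have := gmu_abs_le (X / d)
        have h5 : smF T d / d * |gmu (X / d)| ≤ smF T d / d * 1 := by gcongr
        have h6 : 0 ≤ (d:ℝ)⁻¹ * (4 * D / (Real.log X)^2) := by positivity
        linarith
      · push Not at h
        have hXd : √X ≤ X / d := by rw [le_div_iff₀ hd0]; nlinarith
        have h5 := hg (X / d) (hsq.trans hXd)
        have h6 : Real.log X / 2 ≤ Real.log (X / d) := by
          rw [← Real.log_sqrt hX0.le]; exact Real.log_le_log (by positivity) hXd
        have h7 : |gmu (X / d)| ≤ D / (Real.log X / 2) ^ 2 := h5.trans (by gcongr)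
        have h8 : D / (Real.log X / 2) ^ 2 = 4 * D / (Real.log X)^2 := by field_simp; norm_num
        rw [h8] at h7
        rw [add_zero]
        have h9 : smF T d / d ≤ (d:ℝ)⁻¹ := by rw [← one_div]; gcongr
        gcongr
    refine (Finset.sum_le_sum hb).trans ?_
    rw [Finset.sum_add_distrib, ← Finset.sum_mul, ← hE0]
    gcongr
    have h1 := sum_inv_floor_le (X := X) (by linarith)
    calc (∑ d ∈ S, (d:ℝ)⁻¹) * (4 * D / (Real.log X)^2) ≤ (2 * Real.log X) * (4 * D / (Real.log X)^2) := by
          gcongr; linarith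
      _ = 8 * D / Real.log X := by field_simp; norm_num
  have b2 : ∑ d ∈ S, smF T d ≤ X * ((√X)⁻¹ + EF T X) := by
    have hb : ∀ d ∈ S, smF T d ≤ (if (d:ℝ) ≤ √X then 1 else 0) + X * (if √X < d then smF T d / d else 0) := by
      intro d hd
      simp only [hS, mem_Ioc] at hd
      have hd0 : (0:ℝ) < d := by exact_mod_cast hd.1
      have hdX : (d:ℝ) ≤ X := (Nat.le_floor_iff hX0.le).mp hd.2
      have hs0 := smF_nonneg T d
      have hs1 := smF_le_one T d
      by_cases h : (d:ℝ) ≤ √X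
      · rw [if_pos h, if_neg (by linarith)]; linarith
      · push Not at h
        rw [if_neg (by linarith), if_pos h, zero_add, ← mul_div_assoc, le_div_iff₀ hd0]
        nlinarith
    refine (Finset.sum_le_sum hb).trans ?_
    rw [Finset.sum_add_distrib, ← Finset.mul_sum, ← hE0, mul_add, ← Finset.sum_filter, Finset.sum_const, nsmul_eq_mul, mul_one]
    gcongr
    have h1 : X * (√X)⁻¹ = √X := by
      rw [← div_eq_mul_inv, div_eq_iff (by positivity)]; exact hss.symm
    rw [h1]
    have hc : (S.filter (fun d : ℕ => (d:ℝ) ≤ √X)).card ≤ (Finset.Icc 1 ⌊√X⌋₊).card := by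
      refine Finset.card_le_card ?_
      intro m hm
      simp only [hS, mem_filter, mem_Ioc, mem_Icc] at hm ⊢
      exact ⟨hm.1.1, Nat.le_floor hm.2⟩
    rw [Nat.card_Icc, Nat.add_sub_cancel] at hc
    exact (Nat.cast_le.mpr hc).trans (Nat.floor_le (by positivity))
  rw [HF_eq T hX0.le]
  have b3 : 0 ≤ ∑ d ∈ S, smF T d := Finset.sum_nonneg fun d _ => smF_nonneg T d
  calc _ ≤ |X * ∑ d ∈ S, smF T d / d * gmu (X / d)| + |∑ d ∈ S, smF T d| := abs_sub _ _
    _ ≤ X * (8 * D / Real.log X + EF T X) + X * ((√X)⁻¹ + EF T X) := by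
        rw [abs_mul, abs_of_pos hX0, abs_of_nonneg b3]
        gcongr
        exact (Finset.abs_sum_le_sum_abs _ _).trans b1
    _ = _ := by ring


lemma two_pow_omega_le {a : ℕ} (ha : a ≠ 0) : 2 ^ a.primeFactors.card ≤ a.divisors.card := by
  rw [Nat.card_divisors ha, ← Finset.prod_const]
  refine Finset.prod_le_prod (by simp) fun p hp => ?_
  have := (Nat.mem_primeFactors.mp hp)
  have := this.1.factorization_pos_of_dvd ha this.2.1
  omega

lemma sum_tau_div_le {X : ℝ} (hX : 1 ≤ X) :
    ∑ a ∈ Finset.Ioc 0 ⌊X⌋₊, (a.divisors.card : ℝ) / a ≤ (1 + Real.log X) ^ 2 := by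
  have h3 := ArithmeticFunction.sum_Ioc_mul_eq_sum_sum (R := ℝ) (dvF (zeta : ArithmeticFunction ℝ)) (dvF (zeta : ArithmeticFunction ℝ)) ⌊X⌋₊
  rw [← dvF_mul] at h3
  have h4 : ∀ a : ℕ, dvF ((zeta : ArithmeticFunction ℝ) * (zeta : ArithmeticFunction ℝ)) a = (a.divisors.card : ℝ) / a := by
    intro a
    rw [dvF_apply, coe_mul_zeta_apply]
    congr 1
    rw [Finset.card_eq_sum_ones]
    push_cast
    refine Finset.sum_congr rfl fun i hi => ?_
    have : i ≠ 0 := (Nat.pos_of_mem_divisors hi).ne'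
    simp [natCoe_apply, zeta_apply, this]
  have h5 : ∀ a ∈ Finset.Ioc 0 ⌊X⌋₊, dvF (zeta : ArithmeticFunction ℝ) a = (a:ℝ)⁻¹ := by
    intro a ha
    have : a ≠ 0 := by simp at ha; omega
    simp [dvF_apply, natCoe_apply, zeta_apply, this]
  simp_rw [h4] at h3
  rw [h3, sq]
  have hs := sum_inv_floor_le hX
  have hs0 : 0 ≤ 1 + Real.log X := by have := Real.log_nonneg hX; linarith
  calc _ ≤ ∑ n ∈ Finset.Ioc 0 ⌊X⌋₊, (n:ℝ)⁻¹ * (1 + Real.log X) := by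
        refine Finset.sum_le_sum fun n hn => ?_
        rw [h5 n hn]
        gcongr
        refine le_trans ?_ hs
        have hsub : Finset.Ioc 0 (⌊X⌋₊ / n) ⊆ Finset.Ioc 0 ⌊X⌋₊ := Finset.Ioc_subset_Ioc_right (Nat.div_le_self _ _)
        rw [Finset.sum_congr rfl fun a ha => h5 a (hsub ha)]
        exact Finset.sum_le_sum_of_subset_of_nonneg hsub fun _ _ _ => by positivity
    _ ≤ _ := by rw [← Finset.sum_mul]; gcongr

lemma smooth_tail (Y : ℕ) (hY : 2 ≤ Y) {X : ℝ} (hX : 1 ≤ X) :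
    ∑ d ∈ (Finset.Ioc 0 ⌊X⌋₊).filter (fun d : ℕ => √X < d ∧ d.primeFactors ⊆ Finset.Icc 1 Y), (d:ℝ)⁻¹ ≤
      X ^ (-(1:ℝ)/8) * (1 + Real.log X) ^ 2 +
      (2:ℝ) ^ (-(Real.log X / (4 * Real.log Y))) * (1 + Real.log X) ^ 3 := by
  have hX0 : 0 < X := by linarith
  have hlX : 0 ≤ Real.log X := Real.log_nonneg hX
  have hlY : 0 < Real.log Y := Real.log_pos (by exact_mod_cast (by omega : 1 < Y))
  set κ := Real.log X / (4 * Real.log Y) with hκ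
  set N := ⌊X⌋₊ with hN
  set S := (Finset.Ioc 0 N).filter (fun d : ℕ => √X < d ∧ d.primeFactors ⊆ Finset.Icc 1 Y) with hS
  have hex : ∀ d : ℕ, ∃ ab : ℕ × ℕ, ab.2 ^ 2 * ab.1 = d ∧ Squarefree ab.1 := by
    intro d
    obtain ⟨a, b, h1, h2⟩ := Nat.sq_mul_squarefree d
    exact ⟨(a, b), h1, h2⟩
  choose g hg1 hg2 using hex
  have hginj : Set.InjOn g S := by
    intro d _ d' _ h
    rw [← hg1 d, ← hg1 d', h]
  set F : ℕ × ℕ → ℝ := fun ab => X ^ (-(1:ℝ)/8) * ((ab.1:ℝ)⁻¹ * (ab.2:ℝ)⁻¹) +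
    (2:ℝ) ^ (-κ) * (((ab.1.divisors.card : ℝ) / ab.1) * (ab.2:ℝ)⁻¹) with hF
  have hF0 : ∀ ab, 0 ≤ F ab := fun ab => by simp only [hF]; positivity
  have hmem : ∀ d ∈ S, g d ∈ Finset.Ioc 0 N ×ˢ Finset.Ioc 0 N := by
    intro d hd
    simp only [hS, mem_filter, mem_Ioc] at hd
    have h1 := hg1 d
    have hb : 0 < (g d).2 := by
      rcases Nat.eq_zero_or_pos (g d).2 with h | h
      · rw [h] at h1; simp at h1; omega
      · exact h
    have ha : 0 < (g d).1 := by
      rcases Nat.eq_zero_or_pos (g d).1 with h | h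
      · rw [h] at h1; simp at h1; omega
      · exact h
    have h2 : (g d).1 ≤ d := (Nat.le_mul_of_pos_left _ (by positivity : 0 < (g d).2 ^ 2)).trans h1.le
    have h3 : (g d).2 ≤ d := by
      calc (g d).2 ≤ (g d).2 ^ 2 := Nat.le_self_pow (by norm_num) _
        _ ≤ (g d).2 ^ 2 * (g d).1 := Nat.le_mul_of_pos_right _ ha
        _ = d := h1
    simp only [mem_product, mem_Ioc]
    omega
  have hpt : ∀ d ∈ S, (d:ℝ)⁻¹ ≤ F (g d) := by
    intro d hd
    have hm := hmem d hd
    simp only [hS, mem_filter, mem_Ioc, mem_product] at hd hm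
    have h1 := hg1 d
    have h2 := hg2 d
    have hsub : (g d).1.primeFactors ⊆ d.primeFactors :=
      Nat.primeFactors_mono (Dvd.intro_left _ h1) (by omega)
    set a := (g d).1 with ha
    set b := (g d).2 with hb
    have ha0 : (0:ℝ) < a := by exact_mod_cast hm.1.1
    have hb0 : (0:ℝ) < b := by exact_mod_cast hm.2.1
    have e : (d:ℝ)⁻¹ = (a:ℝ)⁻¹ * (b:ℝ)⁻¹ * (b:ℝ)⁻¹ := by
      rw [← h1]; push_cast; field_simp
    have hFe : F (g d) = X ^ (-(1:ℝ)/8) * ((a:ℝ)⁻¹ * (b:ℝ)⁻¹) +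
      (2:ℝ) ^ (-κ) * (((a.divisors.card : ℝ) / a) * (b:ℝ)⁻¹) := rfl
    rw [hFe, e]
    by_cases hbX : X ^ ((1:ℝ)/8) ≤ b
    · have h3 : (b:ℝ)⁻¹ ≤ X ^ (-(1:ℝ)/8) := by
        rw [neg_div, Real.rpow_neg hX0.le]
        gcongr
      have h4 : (a:ℝ)⁻¹ * (b:ℝ)⁻¹ * (b:ℝ)⁻¹ ≤ (a:ℝ)⁻¹ * (b:ℝ)⁻¹ * X ^ (-(1:ℝ)/8) := by gcongr
      have h5 : 0 ≤ (2:ℝ) ^ (-κ) * (((a.divisors.card : ℝ) / a) * (b:ℝ)⁻¹) := by positivity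
      linarith
    · push Not at hbX
      have hb2 : (b:ℝ) ^ 2 ≤ X ^ ((1:ℝ)/4) := by
        have : X ^ ((1:ℝ)/4) = (X ^ ((1:ℝ)/8)) ^ 2 := by
          rw [← Real.rpow_natCast, ← Real.rpow_mul hX0.le]; norm_num
        rw [this]; gcongr
      have haX : X ^ ((1:ℝ)/4) ≤ a := by
        have h3 : √X < b ^ 2 * a := by
          have := hd.2.1; rw [← h1] at this; push_cast at this; exact this
        have h4 : √X = X ^ ((1:ℝ)/4) * X ^ ((1:ℝ)/4) := by
          rw [← Real.rpow_add hX0, Real.sqrt_eq_rpow]; norm_num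
        rw [h4] at h3
        have h5 : 0 < X ^ ((1:ℝ)/4) := by positivity
        have h6 : X ^ ((1:ℝ)/4) * X ^ ((1:ℝ)/4) < X ^ ((1:ℝ)/4) * a := h3.trans_le (by gcongr)
        exact (lt_of_mul_lt_mul_left h6 h5.le).le
      have hYa : a ≤ Y ^ a.primeFactors.card := by
        calc a = ∏ p ∈ a.primeFactors, p := (Nat.prod_primeFactors_of_squarefree h2).symm
          _ ≤ _ := Finset.prod_le_pow_card _ _ _ fun p hp => (mem_Icc.mp (hd.2.2 (hsub hp))).2
      have hω : κ ≤ a.primeFactors.card := by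
        have h3 : Real.log (X ^ ((1:ℝ)/4)) ≤ Real.log ((Y:ℝ) ^ a.primeFactors.card) :=
          Real.log_le_log (by positivity) (haX.trans (by exact_mod_cast hYa))
        rw [Real.log_rpow hX0, Real.log_pow] at h3
        rw [hκ, div_le_iff₀ (by positivity)]
        linarith
      have hone : 1 ≤ (2:ℝ) ^ (-κ) * a.divisors.card := by
        have h3 : ((2:ℝ) ^ a.primeFactors.card) ≤ a.divisors.card := by
          exact_mod_cast two_pow_omega_le (by omega : a ≠ 0)
        have h4 : (2:ℝ) ^ κ ≤ (2:ℝ) ^ a.primeFactors.card := by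
          rw [← Real.rpow_natCast]
          exact Real.rpow_le_rpow_of_exponent_le (by norm_num) hω
        rw [Real.rpow_neg (by norm_num)]
        rw [inv_mul_eq_div, le_div_iff₀ (by positivity)]
        linarith
      have hb1 : (b:ℝ)⁻¹ ≤ 1 := inv_le_one_of_one_le₀ (by exact_mod_cast hm.2.1)
      have h5 : 0 ≤ X ^ (-(1:ℝ)/8) * ((a:ℝ)⁻¹ * (b:ℝ)⁻¹) := by positivity
      have h6 : (a:ℝ)⁻¹ * (b:ℝ)⁻¹ * (b:ℝ)⁻¹ ≤ (2:ℝ) ^ (-κ) * (((a.divisors.card : ℝ) / a) * (b:ℝ)⁻¹) := by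
        calc (a:ℝ)⁻¹ * (b:ℝ)⁻¹ * (b:ℝ)⁻¹ ≤ (a:ℝ)⁻¹ * (b:ℝ)⁻¹ * ((2:ℝ) ^ (-κ) * a.divisors.card) := by
              gcongr; linarith
          _ = _ := by ring
      linarith
  have hinv := sum_inv_floor_le hX
  have htau := sum_tau_div_le hX
  calc _ ≤ ∑ d ∈ S, F (g d) := Finset.sum_le_sum hpt
    _ = ∑ ab ∈ S.image g, F ab := (Finset.sum_image hginj).symm
    _ ≤ ∑ ab ∈ Finset.Ioc 0 N ×ˢ Finset.Ioc 0 N, F ab := by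
        refine Finset.sum_le_sum_of_subset_of_nonneg ?_ fun _ _ _ => hF0 _
        intro ab h
        obtain ⟨d, hd, rfl⟩ := Finset.mem_image.mp h
        exact hmem d hd
    _ = X ^ (-(1:ℝ)/8) * ((∑ a ∈ Finset.Ioc 0 N, (a:ℝ)⁻¹) * ∑ b ∈ Finset.Ioc 0 N, (b:ℝ)⁻¹) +
        (2:ℝ) ^ (-κ) * ((∑ a ∈ Finset.Ioc 0 N, (a.divisors.card : ℝ) / a) * ∑ b ∈ Finset.Ioc 0 N, (b:ℝ)⁻¹) := by
        simp only [hF]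
        rw [Finset.sum_add_distrib, ← Finset.mul_sum, ← Finset.mul_sum, Finset.sum_mul_sum, Finset.sum_mul_sum,
          Finset.sum_product, Finset.sum_product]
    _ ≤ X ^ (-(1:ℝ)/8) * ((1 + Real.log X) * (1 + Real.log X)) +
        (2:ℝ) ^ (-κ) * ((1 + Real.log X) ^ 2 * (1 + Real.log X)) := by
        gcongr
    _ = _ := by ring

lemma EF_bound (Y q : ℕ) (hY : 2 ≤ Y) (T : Finset ℕ) (hT : T ⊆ insert q (Finset.Icc 1 Y)) {X : ℝ} (hX : 1 ≤ X) :
    EF T X ≤ (1 + Real.log X) / Y + X ^ (-(1:ℝ)/8) * (1 + Real.log X) ^ 2 +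
      (2:ℝ) ^ (-(Real.log X / (4 * Real.log Y))) * (1 + Real.log X) ^ 3 := by
  have hlX : 0 ≤ Real.log X := Real.log_nonneg hX
  have hY0 : (0:ℝ) < Y := by exact_mod_cast (by omega : 0 < Y)
  have hsm := smooth_tail Y hY hX
  set N := ⌊X⌋₊ with hN
  have hq : ∑ d ∈ (Finset.Ioc 0 N).filter (fun d : ℕ => Y < q ∧ q ∣ d), (d:ℝ)⁻¹ ≤ (1 + Real.log X) / Y := by
    by_cases hYq : Y < q
    · simp only [hYq, true_and]
      have hq0 : 0 < q := by omega
      have hq0' : (0:ℝ) < q := by exact_mod_cast hq0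
      calc _ = ∑ d ∈ (Finset.Ioc 0 N).filter (fun d : ℕ => q ∣ d), (((d / q : ℕ)):ℝ)⁻¹ * (q:ℝ)⁻¹ := by
            refine Finset.sum_congr rfl fun d hd => ?_
            simp only [mem_filter, mem_Ioc] at hd
            obtain ⟨e, rfl⟩ := hd.2
            rw [Nat.mul_div_cancel_left _ hq0]
            push_cast; rw [mul_inv]; ring
        _ = ∑ e ∈ ((Finset.Ioc 0 N).filter (fun d : ℕ => q ∣ d)).image (fun d => d / q), (e:ℝ)⁻¹ * (q:ℝ)⁻¹ := by
            rw [Finset.sum_image]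
            intro a ha b hb h
            simp only [coe_filter, Set.mem_ofPred_eq] at ha hb
            exact (Nat.div_left_inj ha.2 hb.2).mp h
        _ ≤ ∑ e ∈ Finset.Ioc 0 N, (e:ℝ)⁻¹ * (q:ℝ)⁻¹ := by
            refine Finset.sum_le_sum_of_subset_of_nonneg ?_ fun _ _ _ => by positivity
            intro e he
            simp only [mem_image, mem_filter, mem_Ioc] at he ⊢
            obtain ⟨d, ⟨⟨h1, h2⟩, h3⟩, rfl⟩ := he
            exact ⟨Nat.div_pos (Nat.le_of_dvd h1 h3) hq0, (Nat.div_le_self _ _).trans h2⟩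
        _ ≤ (1 + Real.log X) * (Y:ℝ)⁻¹ := by
            rw [← Finset.sum_mul]
            have := sum_inv_floor_le hX
            gcongr
        _ = _ := by rw [div_eq_mul_inv]
    · simp [hYq]; positivity
  have hle : EF T X ≤ ∑ d ∈ (Finset.Ioc 0 N).filter (fun d : ℕ => Y < q ∧ q ∣ d), (d:ℝ)⁻¹ +
      ∑ d ∈ (Finset.Ioc 0 N).filter (fun d : ℕ => √X < d ∧ d.primeFactors ⊆ Finset.Icc 1 Y), (d:ℝ)⁻¹ := by
    unfold EF
    rw [Finset.sum_filter, Finset.sum_filter, Finset.sum_filter, ← Finset.sum_add_distrib]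
    refine Finset.sum_le_sum fun d hd => ?_
    have hi : (0:ℝ) ≤ (d:ℝ)⁻¹ := by positivity
    have hn1 : (0:ℝ) ≤ (if Y < q ∧ q ∣ d then (d:ℝ)⁻¹ else 0) := by split_ifs <;> simp
    have hn2 : (0:ℝ) ≤ (if √X < d ∧ d.primeFactors ⊆ Finset.Icc 1 Y then (d:ℝ)⁻¹ else 0) := by split_ifs <;> simp
    by_cases h : √X < d
    · rw [if_pos h, smF_apply]
      by_cases hs : d ≠ 0 ∧ d.primeFactors ⊆ T
      · rw [if_pos hs, one_div]
        by_cases h2 : Y < q ∧ q ∣ d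
        · rw [if_pos h2]; linarith
        · have h3 : d.primeFactors ⊆ Finset.Icc 1 Y := by
            intro p hp
            have h4 := hT (hs.2 hp)
            rw [Finset.mem_insert] at h4
            rcases h4 with rfl | h4
            · have h5 := Nat.mem_primeFactors.mp hp
              have := h5.1.pos
              rw [mem_Icc]
              refine ⟨this, ?_⟩
              by_contra h6
              exact h2 ⟨by omega, h5.2.1⟩
            · exact h4
          rw [if_pos (⟨h, h3⟩ : √X < d ∧ d.primeFactors ⊆ Finset.Icc 1 Y)]
          linarith
      · rw [if_neg hs, zero_div]; linarith
    · rw [if_neg h]; linarith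
  linarith


/-- inner sum over integers with given smallest prime factor and a given prime factor -/
noncomputable def innerS (x : ℝ) (p q : ℕ) : ℝ :=
  ∑ n ∈ (Finset.Icc 2 ⌊x⌋₊).filter (fun n => n.minFac = p ∧ q ∣ n), (moebius n : ℝ) * Int.fract (x / n)

lemma innerS_lt (x : ℝ) {p q : ℕ} (hq : q.Prime) (h : q < p) : innerS x p q = 0 := by
  unfold innerS
  rw [Finset.filter_false_of_mem, Finset.sum_empty]
  rintro n _ ⟨h1, h2⟩
  have := Nat.minFac_le_of_dvd hq.two_le h2
  omega

lemma innerS_eq {x : ℝ} (hx : 0 ≤ x) {p q a : ℕ} (hp : p.Prime) (hq : q.Prime) (hpq : p ≤ q)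
    (ha : a = if q = p then p else p * q) :
    innerS x p q = moebius a * HF (insert q (Finset.Icc 1 p)) (x / a) := by
  set T := insert q (Finset.Icc 1 p) with hT
  have hpa : p ∣ a := by rw [ha]; split_ifs; exacts [dvd_rfl, dvd_mul_right _ _]
  have hqa : q ∣ a := by
    rw [ha]; split_ifs with h
    · rw [h]
    · exact dvd_mul_left _ _
  have ha0 : 0 < a := by rw [ha]; split_ifs; exacts [hp.pos, Nat.mul_pos hp.pos hq.pos]
  have hra : ∀ r, r.Prime → r ∣ a → r = p ∨ r = q := by
    intro r hr hra
    rw [ha] at hra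
    split_ifs at hra with h
    · exact Or.inl ((Nat.prime_dvd_prime_iff_eq hr hp).mp hra)
    · rcases (Nat.Prime.dvd_mul hr).mp hra with h1 | h1
      · exact Or.inl ((Nat.prime_dvd_prime_iff_eq hr hp).mp h1)
      · exact Or.inr ((Nat.prime_dvd_prime_iff_eq hr hq).mp h1)
  have hpT : p ∈ T := by rw [hT, mem_insert, mem_Icc]; exact Or.inr ⟨hp.pos, le_rfl⟩
  have hqT : q ∈ T := mem_insert_self _ _
  have hcop : ∀ m : ℕ, m ≠ 0 → Disjoint m.primeFactors T → Nat.Coprime a m := by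
    intro m hm hd
    rw [Nat.coprime_iff_gcd_eq_one]
    by_contra h
    obtain ⟨r, hr, hrd⟩ := Nat.exists_prime_and_dvd h
    have h1 : r ∈ m.primeFactors := Nat.mem_primeFactors.mpr ⟨hr, hrd.trans (Nat.gcd_dvd_right _ _), hm⟩
    refine Finset.disjoint_left.mp hd h1 ?_
    rcases hra r hr (hrd.trans (Nat.gcd_dvd_left _ _)) with rfl | rfl
    · exact hpT
    · exact hqT
  have ha0' : (0:ℝ) < a := by exact_mod_cast ha0
  unfold HF innerS
  rw [Finset.mul_sum]
  have hres : ∑ m ∈ Finset.Ioc 0 ⌊x / a⌋₊, (moebius a : ℝ) * (cpF T m * Int.fract (x / a / m)) =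
      ∑ m ∈ (Finset.Ioc 0 ⌊x / a⌋₊).filter (fun m => Disjoint m.primeFactors T),
        (moebius a : ℝ) * (cpF T m * Int.fract (x / a / m)) := by
    rw [Finset.sum_filter]
    refine Finset.sum_congr rfl fun m _ => ?_
    split_ifs with h
    · rfl
    · rw [cpF_apply, if_neg (fun h2 => h h2.2)]; ring
  rw [hres]
  symm
  refine Finset.sum_of_injOn (fun m => a * m) ?_ ?_ ?_ ?_
  · intro m _ m' _ h
    exact Nat.eq_of_mul_eq_mul_left ha0 h
  · intro m hm
    simp only [coe_filter, mem_Ioc, mem_Icc, Set.mem_ofPred_eq] at hm ⊢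
    obtain ⟨⟨hm0, hmx⟩, hd⟩ := hm
    have h2p : p ≤ a * m := Nat.le_of_dvd (Nat.mul_pos ha0 hm0) (hpa.trans (dvd_mul_right _ _))
    have hp2 := hp.two_le
    refine ⟨⟨by omega, ?_⟩, ?_, hqa.trans (dvd_mul_right _ _)⟩
    · rw [Nat.le_floor_iff (by positivity)] at hmx
      rw [Nat.le_floor_iff hx]
      rw [le_div_iff₀ ha0'] at hmx
      push_cast; linarith
    · refine le_antisymm (Nat.minFac_le_of_dvd hp2 (hpa.trans (dvd_mul_right _ _))) ?_
      have h1 : (a * m) ≠ 1 := by omega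
      have hr := Nat.minFac_prime h1
      have hrd := Nat.minFac_dvd (a * m)
      set r := (a * m).minFac
      rcases (Nat.Prime.dvd_mul hr).mp hrd with h | h
      · rcases hra r hr h with h | h <;> omega
      · have h3 : r ∈ m.primeFactors := Nat.mem_primeFactors.mpr ⟨hr, h, by omega⟩
        have h4 := Finset.disjoint_left.mp hd h3
        rw [hT, mem_insert, mem_Icc, not_or, not_and] at h4
        have := h4.2 hr.pos
        omega
  · intro n hn hni
    by_contra hne
    have hsq : Squarefree n := by
      by_contra h
      rw [moebius_eq_zero_of_not_squarefree h] at hne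
      simp at hne
    simp only [mem_filter, mem_Icc] at hn
    obtain ⟨⟨hn2, hnx⟩, hmf, hqn⟩ := hn
    have hpn : p ∣ n := hmf ▸ Nat.minFac_dvd n
    have han : a ∣ n := by
      rw [ha]
      split_ifs with h
      · exact hpn
      · exact Nat.Coprime.mul_dvd_of_dvd_of_dvd ((Nat.coprime_primes hp hq).mpr (Ne.symm h)) hpn hqn
    obtain ⟨m, rfl⟩ := han
    have hm0 : 0 < m := by
      rcases Nat.eq_zero_or_pos m with h | h
      · subst h; simp at hn2
      · exact h
    refine hni ⟨m, ?_, rfl⟩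
    simp only [coe_filter, mem_Ioc, Set.mem_ofPred_eq]
    refine ⟨⟨hm0, ?_⟩, ?_⟩
    · rw [Nat.le_floor_iff (by positivity), le_div_iff₀ ha0']
      rw [Nat.le_floor_iff hx] at hnx
      push_cast at hnx; linarith
    · rw [Finset.disjoint_left]
      intro r hr hrT
      have hr2 := Nat.mem_primeFactors.mp hr
      have hcp := (Nat.squarefree_mul_iff.mp hsq).1
      have hnot : ∀ s, s.Prime → s ∣ a → s ∣ m → False := by
        intro s hs h1 h2
        have := Nat.dvd_gcd h1 h2
        rw [Nat.coprime_iff_gcd_eq_one.mp hcp] at this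
        exact hs.one_lt.ne' (Nat.dvd_one.mp this)
      rw [hT, mem_insert, mem_Icc] at hrT
      rcases hrT with rfl | h
      · exact hnot r hr2.1 hqa hr2.2.1
      · have h3 := Nat.minFac_le_of_dvd hr2.1.two_le (hr2.2.1.trans (dvd_mul_left m a))
        have : r = p := by omega
        subst this
        exact hnot r hr2.1 hpa hr2.2.1
  · intro m hm
    simp only [mem_filter, mem_Ioc] at hm
    have hc := hcop m (by omega) hm.2
    simp only [cpF_apply]
    rw [if_pos ⟨by omega, hm.2⟩, isMultiplicative_moebius.map_mul_of_coprime hc]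
    push_cast
    rw [div_div]; ring

lemma param_err {L l : ℝ} (hl : 128 ≤ l) (hLl : l = Real.log L) (hL0 : 0 < L) :
    40 * l ^ 2 ≤ √L := by
  have h1 : √L = Real.exp (l / 2) := by
    rw [Real.exp_half, hLl, Real.exp_log hL0]
  rw [h1]
  have h2 := Real.pow_div_factorial_le_exp (l/2) (by linarith) 4
  refine le_trans ?_ h2
  rw [show ((Nat.factorial 4 : ℕ) : ℝ) = 24 by norm_num [Nat.factorial]]
  have h3 : 128 * 128 ≤ l ^ 2 := by nlinarith
  have h4 : (l/2) ^ 4 = l ^ 2 * l ^ 2 / 16 := by ring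
  rw [h4]; nlinarith

lemma HF_small : ∃ C : ℝ, 0 < C ∧ ∀ (x L l X : ℝ) (Y q : ℕ) (T : Finset ℕ), L = Real.log x → l = Real.log L →
    0 < L → 128 ≤ l → 0 < x → Y = ⌊Real.exp (√L / l)⌋₊ → Real.exp (√L * l) ≤ X → X ≤ x →
    T ⊆ insert q (Finset.Icc 1 Y) → |HF T X| ≤ C / √L * X := by
  obtain ⟨D, hD, hH⟩ := HF_bound
  refine ⟨D + 65, by positivity, ?_⟩
  intro x L l X Y q T hL hl hL0 hl128 hx0 hY hzX hXx hT
  have h40 := param_err hl128 hl hL0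
  have hl0 : 0 < l := by linarith
  have hLe : L = Real.exp l := by rw [hl, Real.exp_log hL0]
  have hsL : √L = Real.exp (l/2) := by rw [Real.exp_half, ← hLe]
  have hs0 : 0 < √L := by positivity
  have hsl : 40 ≤ √L := by nlinarith
  have hX0 : 0 < X := lt_of_lt_of_le (Real.exp_pos _) hzX
  have hlogX : √L * l ≤ Real.log X := by rwa [Real.le_log_iff_exp_le hX0]
  have hlogX1 : √L ≤ Real.log X := by nlinarith
  have hlogXL : Real.log X ≤ L := by rw [hL]; exact Real.log_le_log hX0 hXx
  have hX4 : 4 ≤ X := by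
    have := Real.add_one_le_exp (√L * l)
    nlinarith
  set w := Real.exp (-(5 * l)) with hw
  -- y
  have hyl : 40 * l ≤ √L / l := by rw [le_div_iff₀ hl0]; nlinarith
  have hy1 : Real.exp (5 * l) ≤ Real.exp (√L / l) := Real.exp_le_exp.mpr (by linarith)
  have h5l : 4 ≤ Real.exp (5 * l) := by
    have := Real.add_one_le_exp (5 * l); linarith
  have hYy : (Y:ℝ) ≤ Real.exp (√L / l) := by rw [hY]; exact Nat.floor_le (Real.exp_pos _).le
  have hYlow : Real.exp (5 * l) / 2 ≤ Y := by
    have := Nat.lt_floor_add_one (Real.exp (√L / l))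
    rw [← hY] at this
    linarith
  have hY2 : 2 ≤ Y := by
    have : (2:ℝ) ≤ Y := by linarith
    exact_mod_cast this
  have hY0 : (0:ℝ) < Y := by linarith
  have hE := EF_bound Y q hY2 T hT (X := X) (by linarith)
  have t1 : (Y:ℝ)⁻¹ ≤ 2 * w := by
    have : (2:ℝ) * w = (Real.exp (5 * l) / 2)⁻¹ := by
      rw [hw, Real.exp_neg, inv_div]; ring
    rw [this]; gcongr
  have t2 : X ^ (-(1:ℝ)/8) ≤ w := by
    rw [Real.rpow_def_of_pos hX0, hw, Real.exp_le_exp]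
    nlinarith
  have t3 : (2:ℝ) ^ (-(Real.log X / (4 * Real.log Y))) ≤ w := by
    rw [Real.rpow_def_of_pos (by norm_num), hw, Real.exp_le_exp]
    have hlY0 : 0 < Real.log Y := Real.log_pos (by exact_mod_cast (by omega : 1 < Y))
    have hlY : Real.log Y ≤ √L / l := by
      rw [← Real.log_exp (√L / l)]; exact Real.log_le_log hY0 hYy
    have h1 : l ^ 2 / 4 ≤ Real.log X / (4 * Real.log Y) := by
      rw [le_div_iff₀ (by positivity)]
      calc l ^ 2 / 4 * (4 * Real.log Y) ≤ l ^ 2 / 4 * (4 * (√L / l)) := by gcongr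
        _ = √L * l := by field_simp
        _ ≤ _ := hlogX
    have h2 := Real.log_two_gt_d9
    have h3 : 0.69 * (l ^ 2 / 4) ≤ Real.log 2 * (Real.log X / (4 * Real.log Y)) := by
      gcongr; linarith
    nlinarith
  have t4 : (√X)⁻¹ ≤ w := by
    refine le_trans ?_ t2
    rw [Real.sqrt_eq_rpow, ← Real.rpow_neg hX0.le]
    exact Real.rpow_le_rpow_of_exponent_le (by linarith) (by norm_num)
  have hL1 : 1 ≤ L := by rw [hLe]; exact Real.one_le_exp hl0.le
  set B := 1 + Real.log X with hB
  have hB1 : 1 ≤ B := by rw [hB]; linarith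
  have hB2 : B ≤ 2 * L := by linarith
  have hB3 : B ^ 3 ≤ 8 * L ^ 3 := by
    calc B ^ 3 ≤ (2 * L) ^ 3 := by gcongr
      _ = _ := by ring
  have hBa : B ≤ B ^ 3 := le_self_pow₀ hB1 (by norm_num)
  have hBb : B ^ 2 ≤ B ^ 3 := pow_le_pow_right₀ hB1 (by norm_num)
  have hw0 : 0 < w := Real.exp_pos _
  have hEw : EF T X ≤ 32 * (L ^ 3 * w) := by
    refine hE.trans ?_
    have a1 : B / Y ≤ 8 * L ^ 3 * (2 * w) := by
      rw [div_eq_mul_inv]; gcongr; linarith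
    have a2 : X ^ (-(1:ℝ)/8) * B ^ 2 ≤ w * (8 * L ^ 3) := by gcongr; linarith
    have a3 : (2:ℝ) ^ (-(Real.log X / (4 * Real.log Y))) * B ^ 3 ≤ w * (8 * L ^ 3) := by gcongr
    linarith
  have hws : L ^ 3 * w ≤ 1 / √L := by
    rw [hsL, hLe, hw, one_div, ← Real.exp_neg, ← Real.exp_nat_mul, ← Real.exp_add, Real.exp_le_exp]
    push_cast; linarith
  have hws2 : w ≤ 1 / √L := le_trans (le_mul_of_one_le_left hw0.le (one_le_pow₀ hL1)) hws
  have hDl : D / Real.log X ≤ D / √L := by gcongr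
  refine (hH T X hX4).trans ?_
  rw [mul_comm]
  gcongr
  have : (D + 65) / √L = D / √L + 65 * (1 / √L) := by ring
  rw [this]
  linarith

lemma innerS_bound : ∃ C : ℝ, 0 < C ∧ ∀ (x L l : ℝ) (Y p q : ℕ), L = Real.log x → l = Real.log L →
    0 < L → 128 ≤ l → 0 < x → Y = ⌊Real.exp (√L / l)⌋₊ → p.Prime → q.Prime → p ≤ Y →
    (q:ℝ) ≤ x / (Real.exp (√L / l) * Real.exp (√L * l)) →
    |innerS x p q| ≤ C / √L * x * ((p:ℝ)⁻¹ * (q:ℝ)⁻¹ + if q = p then (p:ℝ)⁻¹ else 0) := by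
  obtain ⟨C, hC, h⟩ := HF_small
  refine ⟨C, hC, ?_⟩
  intro x L l Y p q hL hl hL0 hl128 hx0 hY hp hq hpY hqW
  have hs0 : 0 < √L := by positivity
  have hp0 : (0:ℝ) < p := by exact_mod_cast hp.pos
  have hq0 : (0:ℝ) < q := by exact_mod_cast hq.pos
  have hRHS : 0 ≤ C / √L * x * ((p:ℝ)⁻¹ * (q:ℝ)⁻¹ + if q = p then (p:ℝ)⁻¹ else 0) := by
    have : (0:ℝ) ≤ if q = p then (p:ℝ)⁻¹ else 0 := by split_ifs <;> positivity
    positivity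
  rcases lt_or_ge q p with hlt | hge
  · rw [innerS_lt x hq hlt, abs_zero]; exact hRHS
  set a := if q = p then p else p * q with ha
  rw [innerS_eq hx0.le hp hq hge ha, abs_mul]
  set y := Real.exp (√L / l)
  set z := Real.exp (√L * l)
  have hy0 : 0 < y := Real.exp_pos _
  have hz0 : 0 < z := Real.exp_pos _
  have hy1 : 1 ≤ y := Real.one_le_exp (by positivity)
  have hYy : (Y:ℝ) ≤ y := by rw [hY]; exact Nat.floor_le hy0.le
  have hpy : (p:ℝ) ≤ y := le_trans (Nat.cast_le.mpr hpY) hYy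
  have hqW2 : (q:ℝ) * (y * z) ≤ x := by rwa [le_div_iff₀ (by positivity)] at hqW
  have ha1 : 1 ≤ a := by rw [ha]; split_ifs; exacts [hp.pos, Nat.mul_pos hp.pos hq.pos]
  have ha0 : (0:ℝ) < a := by exact_mod_cast ha1
  have haz : z * a ≤ x := by
    have : (a:ℝ) ≤ y * q := by
      rw [ha]; split_ifs with h
      · rw [h]; nlinarith
      · push_cast; gcongr
    calc z * a ≤ z * (y * q) := by gcongr
      _ = q * (y * z) := by ring
      _ ≤ x := hqW2
  have hb := h x L l (x / a) Y q (insert q (Finset.Icc 1 p)) hL hl hL0 hl128 hx0 hY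
    (by rwa [le_div_iff₀ ha0]) (div_le_self hx0.le (by exact_mod_cast ha1))
    (Finset.insert_subset_insert _ (Finset.Icc_subset_Icc_right hpY))
  have hmu := moebius_abs_le_one a
  calc _ ≤ 1 * (C / √L * (x / a)) := by gcongr
    _ = C / √L * x * (a:ℝ)⁻¹ := by ring
    _ ≤ _ := by
      gcongr
      rw [ha]; split_ifs with h
      · have : 0 ≤ (p:ℝ)⁻¹ * (q:ℝ)⁻¹ := by positivity
        linarith
      · push_cast; rw [mul_inv, add_zero]


lemma card_A (N Y q : ℕ) (hq : q.Prime) :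
    ((Finset.Icc 2 N).filter (fun n => q ∣ n ∧ Y < n.minFac)).card ≤ (rough (N / q) Y).card := by
  classical
  refine Finset.card_le_card_of_injOn (fun n => n / q) ?_ ?_
  · intro n hn
    simp only [Finset.coe_filter, Finset.mem_Icc, Set.mem_ofPred_eq] at hn
    obtain ⟨⟨h2, hN⟩, hqn, hY⟩ := hn
    simp only [rough, Finset.coe_filter, Finset.mem_Icc, Set.mem_ofPred_eq]
    refine ⟨⟨Nat.div_pos (Nat.le_of_dvd (by omega) hqn) hq.pos, Nat.div_le_div_right hN⟩, ?_⟩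
    intro p hp hpd
    have : p ∣ n := hpd.trans (Nat.div_dvd_of_dvd hqn)
    exact lt_of_lt_of_le hY (Nat.minFac_le_of_dvd hp.two_le this)
  · intro a ha b hb hab
    simp only [Finset.coe_filter, Finset.mem_Icc, Set.mem_ofPred_eq] at ha hb
    have h1 := Nat.div_mul_cancel ha.2.1
    have h2 := Nat.div_mul_cancel hb.2.1
    simp only at hab
    rw [← h1, ← h2, hab]

lemma card_B (N V R : ℕ) (hV : 2 ≤ V) (hR : ∀ q r : ℕ, V < q → q * r ≤ N → r ≤ R) :
    ∑ q ∈ ((Finset.Ioc 0 N).filter Nat.Prime).filter (fun q => V < q),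
      (((Finset.Icc 2 N).filter (fun n => q ∣ n)).card : ℝ) ≤
      60 * N / Real.log V * ∑ r ∈ Finset.Icc 1 R, (r:ℝ)⁻¹ := by
  classical
  have hlog : 0 < Real.log V := Real.log_pos (by exact_mod_cast hV)
  have h1 : ∀ q ∈ ((Finset.Ioc 0 N).filter Nat.Prime).filter (fun q => V < q),
      (((Finset.Icc 2 N).filter (fun n => q ∣ n)).card : ℝ) ≤
      ∑ r ∈ Finset.Icc 1 R, if q * r ≤ N then (1:ℝ) else 0 := by
    intro q hq
    simp only [Finset.mem_filter, Finset.mem_Ioc] at hq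
    obtain ⟨⟨_, hqp⟩, hqV⟩ := hq
    rw [← Finset.sum_filter, Finset.sum_const, nsmul_eq_mul, mul_one]
    norm_cast
    refine Finset.card_le_card_of_injOn (fun n => n / q) ?_ ?_
    · intro n hn
      simp only [Finset.coe_filter, Finset.mem_Icc, Set.mem_ofPred_eq] at hn ⊢
      obtain ⟨⟨h2, hN⟩, hqn⟩ := hn
      have h3 : q * (n / q) ≤ N := by rw [Nat.mul_div_cancel' hqn]; exact hN
      exact ⟨⟨Nat.div_pos (Nat.le_of_dvd (by omega) hqn) hqp.pos, hR q _ hqV h3⟩, h3⟩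
    · intro a ha b hb hab
      simp only [Finset.coe_filter, Finset.mem_Icc, Set.mem_ofPred_eq] at ha hb
      have h1 := Nat.div_mul_cancel ha.2
      have h2 := Nat.div_mul_cancel hb.2
      simp only at hab
      rw [← h1, ← h2, hab]
  refine (Finset.sum_le_sum h1).trans ?_
  rw [Finset.sum_comm, Finset.mul_sum]
  refine Finset.sum_le_sum fun r hr => ?_
  rw [Finset.mem_Icc] at hr
  have hr0 : (0:ℝ) < r := by exact_mod_cast hr.1
  rw [← Finset.sum_filter, Finset.sum_const, nsmul_eq_mul, mul_one]
  rcases lt_or_ge (N / r) V with hlt | hge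
  · rw [Finset.filter_eq_empty_iff.mpr]
    · simp only [Finset.card_empty, Nat.cast_zero]; positivity
    · intro q hq hqr
      simp only [Finset.mem_filter] at hq
      have := (Nat.le_div_iff_mul_le hr.1).mpr hqr
      omega
  · have hc : (((((Finset.Ioc 0 N).filter Nat.Prime).filter (fun q => V < q)).filter
        (fun q => q * r ≤ N)).card : ℝ) ≤ (rough (N / r) V).card := by
      norm_cast
      refine Finset.card_le_card ?_
      intro q hq
      simp only [Finset.mem_filter, Finset.mem_Ioc] at hq
      obtain ⟨⟨⟨h0, hqp⟩, hqV⟩, hqr⟩ := hq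
      simp only [rough, Finset.mem_filter, Finset.mem_Icc]
      refine ⟨⟨h0.1, (Nat.le_div_iff_mul_le hr.1).mpr hqr⟩, ?_⟩
      intro p hp hpq
      rw [(Nat.prime_dvd_prime_iff_eq hp hqp).mp hpq]; exact hqV
    refine hc.trans ((rough_card (N / r) V hV hge).trans ?_)
    have : ((N / r : ℕ) : ℝ) ≤ N / r := Nat.cast_div_le
    calc 60 * ((N / r : ℕ) : ℝ) / Real.log V ≤ 60 * ((N:ℝ) / r) / Real.log V := by gcongr
      _ = _ := by ring

lemma g_abs_le (x : ℝ) (n : ℕ) : |(moebius n : ℝ) * Int.fract (x / n)| ≤ 1 := by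
  rw [abs_mul]
  have h1 := moebius_abs_le_one n
  have h2 : |Int.fract (x / (n:ℝ))| ≤ 1 := by
    rw [abs_of_nonneg (Int.fract_nonneg _)]; exact (Int.fract_lt_one _).le
  calc _ ≤ (1:ℝ) * 1 := by gcongr
    _ = 1 := one_mul 1

lemma sum_abs_le_card {s : Finset ℕ} (x : ℝ) :
    |∑ n ∈ s, (moebius n : ℝ) * Int.fract (x / n)| ≤ s.card := by
  refine (Finset.abs_sum_le_sum_abs _ _).trans ?_
  refine (Finset.sum_le_sum fun n _ => g_abs_le x n).trans ?_
  simp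

lemma sum_swap (x : ℝ) (Q : ℕ → Prop) [DecidablePred Q] :
    ∑ n ∈ (Finset.Icc 2 ⌊x⌋₊).filter Q,
          (moebius n : ℝ) * (n.primeFactors.card : ℝ) * Int.fract (x / n) =
    ∑ q ∈ (Finset.Ioc 0 ⌊x⌋₊).filter Nat.Prime,
      ∑ n ∈ ((Finset.Icc 2 ⌊x⌋₊).filter Q).filter (fun n => q ∣ n),
        (moebius n : ℝ) * Int.fract (x / n) := by
  simp_rw [Finset.sum_filter (fun n => _ ∣ n)]
  rw [Finset.sum_comm]
  refine Finset.sum_congr rfl fun n hn => ?_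
  simp only [Finset.mem_filter, Finset.mem_Icc] at hn
  rw [← Finset.sum_filter, Finset.sum_const, nsmul_eq_mul]
  have : ((Finset.Ioc 0 ⌊x⌋₊).filter Nat.Prime).filter (fun q => q ∣ n) = n.primeFactors := by
    ext q
    simp only [Finset.mem_filter, Finset.mem_Ioc, Nat.mem_primeFactors]
    constructor
    · rintro ⟨⟨_, hp⟩, hd⟩; exact ⟨hp, hd, by omega⟩
    · rintro ⟨hp, hd, h0⟩
      exact ⟨⟨⟨hp.pos, (Nat.le_of_dvd (by omega) hd).trans hn.1.2⟩, hp⟩, hd⟩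
  rw [this]; ring

lemma Tq_bound (x : ℝ) (Q : ℕ → Prop) [DecidablePred Q] (Y q : ℕ) (hq : q.Prime) :
    |∑ n ∈ ((Finset.Icc 2 ⌊x⌋₊).filter (fun n => Q n.minFac)).filter (fun n => q ∣ n),
        (moebius n : ℝ) * Int.fract (x / n)| ≤
    (∑ p ∈ (Finset.Ioc 0 Y).filter Nat.Prime, |innerS x p q|) + (rough (⌊x⌋₊ / q) Y).card := by
  classical
  set F := ((Finset.Icc 2 ⌊x⌋₊).filter (fun n => Q n.minFac)).filter (fun n => q ∣ n) with hF
  rw [← Finset.sum_filter_add_sum_filter_not F (fun n => n.minFac ≤ Y)]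
  refine (abs_add_le _ _).trans (add_le_add ?_ ?_)
  · have hmap : ∀ n ∈ F.filter (fun n => n.minFac ≤ Y),
        n.minFac ∈ ((Finset.Ioc 0 Y).filter Nat.Prime).filter Q := by
      intro n hn
      simp only [hF, Finset.mem_filter, Finset.mem_Icc] at hn
      simp only [Finset.mem_filter, Finset.mem_Ioc]
      exact ⟨⟨⟨Nat.minFac_pos n, hn.2⟩, Nat.minFac_prime (by omega)⟩, hn.1.1.2⟩
    rw [← Finset.sum_fiberwise_of_maps_to hmap]
    refine (Finset.abs_sum_le_sum_abs _ _).trans ?_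
    refine le_trans (Finset.sum_le_sum (g := fun p => |innerS x p q|) ?_)
      (Finset.sum_le_sum_of_subset_of_nonneg (Finset.filter_subset _ _)
        (fun _ _ _ => abs_nonneg _))
    intro p hp
    simp only [Finset.mem_filter, Finset.mem_Ioc] at hp
    apply le_of_eq
    unfold innerS
    congr 1
    refine Finset.sum_congr ?_ fun _ _ => rfl
    ext n
    simp only [hF, Finset.mem_filter]
    constructor
    · rintro ⟨⟨⟨⟨h1, h2⟩, h3⟩, h4⟩, h5⟩; exact ⟨h1, h5, h3⟩
    · rintro ⟨h1, h5, h3⟩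
      refine ⟨⟨⟨⟨h1, ?_⟩, h3⟩, ?_⟩, h5⟩
      · rw [h5]; exact hp.2
      · rw [h5]; exact hp.1.1.2
  · refine (sum_abs_le_card x).trans ?_
    norm_cast
    refine le_trans (Finset.card_le_card ?_) (card_A ⌊x⌋₊ Y q hq)
    intro n hn
    simp only [hF, Finset.mem_filter, not_le] at hn ⊢
    exact ⟨hn.1.1.1, hn.1.2, hn.2⟩


lemma half_floor_log {t : ℝ} (ht : 2 ≤ t) (hl : 2 ≤ Real.log t) :
    Real.log t / 2 ≤ Real.log (⌊t⌋₊ : ℝ) := by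
  have h1 : t / 2 ≤ (⌊t⌋₊ : ℝ) := by
    have := Nat.lt_floor_add_one t
    linarith
  have h2 : Real.log (t / 2) ≤ Real.log (⌊t⌋₊ : ℝ) := Real.log_le_log (by linarith) h1
  rw [Real.log_div (by linarith) (by norm_num)] at h2
  have := Real.log_two_lt_d9
  linarith

set_option maxHeartbeats 1000000 in
lemma large_case : ∃ C : ℝ, 0 < C ∧ ∀ (Q : ℕ → Prop) [DecidablePred Q] (x : ℝ), 16 ≤ x →
    128 ≤ Real.log (Real.log x) →
    |∑ n ∈ (Finset.Icc 2 ⌊x⌋₊).filter (fun n => Q n.minFac),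
          (moebius n : ℝ) * (n.primeFactors.card : ℝ) * Int.fract (x / n)|
        ≤ C * x * (Real.log (Real.log x)) ^ 2 / √(Real.log x) := by
  classical
  obtain ⟨C, hC, hin⟩ := innerS_bound
  refine ⟨C * 4160 + 60 * 2 * 64 + 60 * 4 * 4, by positivity, ?_⟩
  intro Q _ x hx hl128
  set L := Real.log x with hL
  set l := Real.log L with hl
  have hx0 : 0 < x := by linarith
  have hL0 : 0 < L := Real.log_pos (by linarith)
  have hs0 : 0 < √L := by positivity
  have hss : √L * √L = L := Real.mul_self_sqrt hL0.le
  have herr := param_err hl128 hl hL0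
  set y := Real.exp (√L / l) with hy
  set z := Real.exp (√L * l) with hz
  set Y := ⌊y⌋₊ with hY
  set W := x / (y * z) with hW
  set V := ⌊W⌋₊ with hV
  set N := ⌊x⌋₊ with hN
  have hy0 : 0 < y := Real.exp_pos _
  have hz0 : 0 < z := Real.exp_pos _
  have hl0 : 0 < l := by linarith
  have hNx : (N:ℝ) ≤ x := Nat.floor_le hx0.le
  have hlogy : Real.log y = √L / l := Real.log_exp _
  have hlogz : Real.log z = √L * l := Real.log_exp _
  have hyl : 2 ≤ Real.log y := by
    rw [hlogy, le_div_iff₀ hl0]; nlinarith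
  have hy2 : 2 ≤ y := by
    have := Real.add_one_le_exp (Real.log y); rw [Real.exp_log hy0] at this; linarith
  have hz1 : 1 ≤ z := Real.one_le_exp (by positivity)
  have hlogW : Real.log W = L - (√L / l + √L * l) := by
    rw [hW, Real.log_div hx0.ne' (by positivity), Real.log_mul hy0.ne' hz0.ne', hlogy, hlogz]
  have hyz_le : √L / l + √L * l ≤ 2 * l * √L := by
    have : √L / l ≤ √L * l := by
      rw [div_le_iff₀ hl0]; nlinarith [mul_nonneg hs0.le (by nlinarith : (0:ℝ) ≤ l * l - 1)]
    linarith
  have hWL : L / 2 ≤ Real.log W := by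
    rw [hlogW]
    have : 2 * l * √L ≤ L / 2 := by
      have : 4 * l ≤ √L := by nlinarith
      nlinarith
    linarith
  have hsbig : 100 ≤ √L := by nlinarith
  have hL4 : 4 ≤ L := by nlinarith
  have hW0 : 0 < W := by positivity
  have hW2 : 2 ≤ W := by
    have := Real.add_one_le_exp (Real.log W); rw [Real.exp_log hW0] at this; linarith
  have hlogV : L / 4 ≤ Real.log V := by
    have := half_floor_log hW2 (by linarith); linarith
  have hlogY : √L / l / 2 ≤ Real.log Y := by
    have := half_floor_log hy2 hyl; rw [hlogy] at this; exact this
  have hY2 : 2 ≤ Y := Nat.le_floor (by exact_mod_cast hy2)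
  have hV2 : 2 ≤ V := Nat.le_floor (by exact_mod_cast hW2)
  have hPN : PS N ≤ 64 * l := PS_le hx
  have hYN : Y ≤ N := by
    apply Nat.floor_le_floor
    have : 1 * (y * z) ≤ x := by rw [← le_div_iff₀ (by positivity)]; linarith
    nlinarith
  have hPY : PS Y ≤ 64 * l := (PS_mono hYN).trans hPN
  have hP0 := PS_nonneg N
  have hPY0 := PS_nonneg Y
  rw [sum_swap x (fun n => Q n.minFac)]
  refine (Finset.abs_sum_le_sum_abs _ _).trans ?_
  rw [← Finset.sum_filter_add_sum_filter_not _ (fun q => V < q)]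
  -- large primes
  have hB : ∑ q ∈ ((Finset.Ioc 0 N).filter Nat.Prime).filter (fun q => V < q),
      |∑ n ∈ ((Finset.Icc 2 N).filter (fun n => Q n.minFac)).filter (fun n => q ∣ n),
        (moebius n : ℝ) * Int.fract (x / n)| ≤ 60 * 4 * 4 * (x * l ^ 2 / √L) := by
    have h1 : ∀ q r : ℕ, V < q → q * r ≤ N → r ≤ ⌊y * z⌋₊ := by
      intro q r hq hqr
      apply Nat.le_floor
      have hWq : W < q := (Nat.floor_lt hW0.le).mp hq
      have h2 : (q:ℝ) * r ≤ x := le_trans (by exact_mod_cast hqr) hNx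
      have h3 : W * r ≤ W * (y * z) := by
        have : W * (y * z) = x := by rw [hW]; field_simp
        rw [this]
        refine le_trans ?_ h2
        gcongr
      exact le_of_mul_le_mul_left h3 hW0
    have h2 := card_B N V ⌊y * z⌋₊ hV2 h1
    refine le_trans (Finset.sum_le_sum fun q _ => ?_) (h2.trans ?_)
    · refine (sum_abs_le_card x).trans ?_
      exact_mod_cast Finset.card_le_card (Finset.filter_subset_filter _ (Finset.filter_subset _ _))
    · have hyz1 : 1 ≤ y * z := by nlinarith
      have h3 : ∑ r ∈ Finset.Icc 1 ⌊y * z⌋₊, (r:ℝ)⁻¹ ≤ 4 * l ^ 2 * √L := by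
        refine (sum_inv_Icc_le _).trans ?_
        have h4 : Real.log (⌊y * z⌋₊ : ℝ) ≤ Real.log (y * z) := by
          apply Real.log_le_log
          · exact_mod_cast Nat.floor_pos.mpr hyz1
          · exact Nat.floor_le (by positivity)
        rw [Real.log_mul hy0.ne' hz0.ne', hlogy, hlogz] at h4
        have h5 : l * √L ≤ l ^ 2 * √L := by
          have : l ≤ l ^ 2 := by nlinarith
          gcongr
        have h6 : 1 * 1 ≤ l * √L := by gcongr <;> linarith
        linarith
      have h30 : 0 ≤ ∑ r ∈ Finset.Icc 1 ⌊y * z⌋₊, (r:ℝ)⁻¹ :=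
        Finset.sum_nonneg fun _ _ => by positivity
      calc _ ≤ 60 * x / (L / 4) * (4 * l ^ 2 * √L) := by gcongr
        _ = 60 * 4 * 4 * (x * l ^ 2 / √L) := by
          nth_rewrite 1 [← hss]
          field_simp
  -- small primes
  have hA : ∑ q ∈ ((Finset.Ioc 0 N).filter Nat.Prime).filter (fun q => ¬ V < q),
      |∑ n ∈ ((Finset.Icc 2 N).filter (fun n => Q n.minFac)).filter (fun n => q ∣ n),
        (moebius n : ℝ) * Int.fract (x / n)| ≤ (C * 4160 + 60 * 2 * 64) * (x * l ^ 2 / √L) := by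
    have hq1 : ∀ q ∈ ((Finset.Ioc 0 N).filter Nat.Prime).filter (fun q => ¬ V < q),
        |∑ n ∈ ((Finset.Icc 2 N).filter (fun n => Q n.minFac)).filter (fun n => q ∣ n),
        (moebius n : ℝ) * Int.fract (x / n)| ≤
        (∑ p ∈ (Finset.Ioc 0 Y).filter Nat.Prime,
          C / √L * x * ((p:ℝ)⁻¹ * (q:ℝ)⁻¹ + if q = p then (p:ℝ)⁻¹ else 0)) +
        60 * 2 * (x * l / √L) * (q:ℝ)⁻¹ := by
      intro q hq
      simp only [Finset.mem_filter, not_lt] at hq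
      obtain ⟨⟨_, hqp⟩, hqV⟩ := hq
      have hqW : (q:ℝ) ≤ W := le_trans (Nat.cast_le.mpr hqV) (Nat.floor_le hW0.le)
      have hq0 : (0:ℝ) < q := by exact_mod_cast hqp.pos
      refine (Tq_bound x Q Y q hqp).trans (add_le_add ?_ ?_)
      · refine Finset.sum_le_sum fun p hp => ?_
        simp only [Finset.mem_filter, Finset.mem_Ioc] at hp
        exact hin x L l Y p q hL hl hL0 hl128 hx0 hY hp.2 hqp hp.1.2 hqW
      · have hYq : Y ≤ N / q := by
          rw [Nat.le_div_iff_mul_le hqp.pos]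
          apply Nat.le_floor
          push_cast
          have h1 : (q:ℝ) * (y * z) ≤ x := by rwa [hW, le_div_iff₀ (by positivity)] at hqW
          have h2 : (Y:ℝ) ≤ y := Nat.floor_le hy0.le
          calc (Y:ℝ) * q ≤ (y * z) * q := by
                gcongr; nlinarith
            _ = q * (y * z) := by ring
            _ ≤ x := h1
        refine (rough_card (N / q) Y hY2 hYq).trans ?_
        have h3 : ((N / q : ℕ) : ℝ) ≤ x / q :=
          Nat.cast_div_le.trans (by gcongr)
        calc 60 * ((N / q : ℕ) : ℝ) / Real.log Y ≤ 60 * (x / q) / (√L / l / 2) := by gcongr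
          _ = _ := by field_simp
    refine (Finset.sum_le_sum hq1).trans ?_
    refine le_trans (Finset.sum_le_sum_of_subset_of_nonneg (Finset.filter_subset _ _) ?_) ?_
    · intro q _ _
      refine add_nonneg (Finset.sum_nonneg fun p _ => ?_) (by positivity)
      have : (0:ℝ) ≤ if q = p then (p:ℝ)⁻¹ else 0 := by split_ifs <;> positivity
      positivity
    rw [Finset.sum_add_distrib, ← Finset.mul_sum]
    have e1 : ∑ q ∈ (Finset.Ioc 0 N).filter Nat.Prime, (q:ℝ)⁻¹ = PS N := rfl
    have e2 : ∑ p ∈ (Finset.Ioc 0 Y).filter Nat.Prime, (p:ℝ)⁻¹ = PS Y := rfl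
    have e3 : ∑ q ∈ (Finset.Ioc 0 N).filter Nat.Prime, ∑ p ∈ (Finset.Ioc 0 Y).filter Nat.Prime,
          C / √L * x * ((p:ℝ)⁻¹ * (q:ℝ)⁻¹ + if q = p then (p:ℝ)⁻¹ else 0) ≤
          C / √L * x * (PS Y * PS N + PS Y) := by
      simp_rw [← Finset.mul_sum]
      gcongr
      simp_rw [Finset.sum_add_distrib]
      apply add_le_add
      · rw [Finset.sum_comm, ← e1, ← e2, Finset.sum_mul_sum]
      · rw [Finset.sum_comm, ← e2]
        refine Finset.sum_le_sum fun p _ => ?_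
        rw [Finset.sum_ite_eq']
        split_ifs
        · exact le_rfl
        · positivity
    rw [e1]
    have e4 : PS Y * PS N + PS Y ≤ 4160 * l ^ 2 := by
      have : PS Y * PS N ≤ (64 * l) * (64 * l) := by gcongr
      nlinarith
    calc _ ≤ C / √L * x * (PS Y * PS N + PS Y) + 60 * 2 * (x * l / √L) * PS N := by gcongr
      _ ≤ C / √L * x * (4160 * l ^ 2) + 60 * 2 * (x * l / √L) * (64 * l) := by gcongr
      _ = _ := by ring
  calc _ ≤ _ := add_le_add hB hA
    _ = _ := by ring

theorem moebius_omega_fract_smallest_factor_progression_bound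
    (k ℓ : ℕ) (hl : 1 ≤ ℓ) (hlk : ℓ ≤ k) (hgcd : Nat.gcd ℓ k = 1) :
    ∃ C > (0 : ℝ), ∀ x : ℝ, 16 ≤ x →
      |∑ n ∈ (Finset.Icc 2 ⌊x⌋₊).filter (fun n => n.minFac ≡ ℓ [MOD k]),
          (moebius n : ℝ) * (n.primeFactors.card : ℝ) * Int.fract (x / n)|
        ≤ C * x * (Real.log (Real.log x)) ^ ((5 : ℝ) / 2) / Real.sqrt (Real.log x) := by
  obtain ⟨C, hC, hlarge⟩ := large_case
  set K := Real.exp (Real.exp 128) with hK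
  have hK0 : 0 < K := Real.exp_pos _
  set M := Real.exp 128 with hM
  have hM0 : 0 < M := Real.exp_pos _
  refine ⟨C + K * √M, by positivity, ?_⟩
  intro x hx
  have hx0 : 0 < x := by linarith
  have hL0 : 0 < Real.log x := Real.log_pos (by linarith)
  have hs0 : 0 < √(Real.log x) := by positivity
  have hl1 := loglog_ge_one hx
  set l := Real.log (Real.log x) with hldef
  have hpow1 : 1 ≤ l ^ ((5:ℝ)/2) := Real.one_le_rpow hl1 (by norm_num)
  rcases le_or_gt 128 l with hbig | hsmall
  · refine (hlarge (fun p => p ≡ ℓ [MOD k]) x hx hbig).trans ?_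
    have h2 : l ^ 2 ≤ l ^ ((5:ℝ)/2) := by
      rw [← Real.rpow_natCast]
      exact Real.rpow_le_rpow_of_exponent_le hl1 (by norm_num)
    gcongr
    have : 0 ≤ K * √M := by positivity
    linarith
  · have hLM : Real.log x ≤ M := by
      rw [← Real.exp_log hL0]; exact Real.exp_le_exp.mpr hsmall.le
    have hxK : x ≤ K := by
      rw [← Real.exp_log hx0]; exact Real.exp_le_exp.mpr hLM
    have hS : |∑ n ∈ (Finset.Icc 2 ⌊x⌋₊).filter (fun n => n.minFac ≡ ℓ [MOD k]),
          (moebius n : ℝ) * (n.primeFactors.card : ℝ) * Int.fract (x / n)| ≤ x * K := by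
      refine (Finset.abs_sum_le_sum_abs _ _).trans ?_
      have hterm : ∀ n ∈ (Finset.Icc 2 ⌊x⌋₊).filter (fun n => n.minFac ≡ ℓ [MOD k]),
          |(moebius n : ℝ) * (n.primeFactors.card : ℝ) * Int.fract (x / n)| ≤ K := by
        intro n hn
        simp only [Finset.mem_filter, Finset.mem_Icc] at hn
        have hg := g_abs_le x n
        have hc : (n.primeFactors.card : ℝ) ≤ K := by
          have h1 : n.primeFactors.card ≤ n := by
            have : n.primeFactors ⊆ Finset.Icc 1 n := by
              intro p hp
              rw [Finset.mem_Icc]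
              exact ⟨(Nat.prime_of_mem_primeFactors hp).pos, Nat.le_of_mem_primeFactors hp⟩
            simpa using Finset.card_le_card this
          have h2 : (n:ℝ) ≤ x := (Nat.cast_le.mpr hn.1.2).trans (Nat.floor_le hx0.le)
          have h3 : (n.primeFactors.card : ℝ) ≤ n := Nat.cast_le.mpr h1
          linarith
        calc _ = (n.primeFactors.card : ℝ) * |(moebius n : ℝ) * Int.fract (x / n)| := by
              rw [mul_right_comm, mul_comm, abs_mul, abs_of_nonneg (Nat.cast_nonneg _)]
          _ ≤ K * 1 := by gcongr
          _ = K := mul_one K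
      refine (Finset.sum_le_card_nsmul _ _ K hterm).trans ?_
      rw [nsmul_eq_mul]
      gcongr
      refine le_trans ?_ (Nat.floor_le hx0.le)
      norm_cast
      refine (Finset.card_filter_le _ _).trans ?_
      simp
    refine hS.trans ?_
    rw [le_div_iff₀ hs0]
    have hsM : √(Real.log x) ≤ √M := Real.sqrt_le_sqrt hLM
    calc x * K * √(Real.log x) ≤ x * K * √M := by gcongr
      _ = (0 + K * √M) * x * 1 := by ring
      _ ≤ (C + K * √M) * x * l ^ ((5:ℝ)/2) := by gcongr
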